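/- arXiv:0802.3021 — 2 statements merged into one kernel-verified Lean document; each statement's English description precedes it below -/
import Mathlib

section
/- Whitney's Theorem for planar curves: two stable planar curves are regularly homotopic (through immersions) if and only if they have the same Whitney winding number. -/
open Set
open scoped ENNReal

noncomputable section

namespace CurvePaper


/-- The determinant of two vectors in the plane `ℝ² ≅ ℂ`. -/
def det2 (u v : ℂ) : ℝ := u.re * v.im - u.im * v.re

/-- The determinant of three vectors in `ℝ³`. -/
def det3 (a b c : EuclideanSpace ℝ (Fin 3)) : ℝ :=
  a 0 * (b 1 * c 2 - b 2 * c 1) - a 1 * (b 0 * c 2 - b 2 * c 0) + a 2 * (b 0 * c 1 - b 1 * c 0)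

/-- The homomorphism `φ : 𝕏 → ℤ`, `X_{a,b} ↦ a - b`, on the free abelian group `𝕏`
with basis `{X_{a,b} : a b ∈ ℤ}`. -/
def phi : FreeAbelianGroup (ℤ × ℤ) →+ ℤ :=
  FreeAbelianGroup.lift fun p : ℤ × ℤ => p.1 - p.2

/-! ### Planar curves -/

/-- A closed planar curve: a smooth immersion of the circle `ℝ/ℤ` into the plane. -/
structure PlanarCurve : Type where
  toFun : ℝ → ℂ
  periodic : Function.Periodic toFun 1
  smooth : ContDiff ℝ (⊤ : ℕ∞) toFun
  immersion : ∀ t : ℝ, deriv toFun t ≠ 0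

namespace PlanarCurve

/-- The number of parameters in one period mapping to a given point. -/
def multF (f : ℝ → ℂ) (p : ℂ) : ℕ := Set.ncard {t ∈ Set.Ico (0:ℝ) 1 | f t = p}

/-- All self-intersections of `f` at the point `p` are transverse. -/
def TransverseF (f : ℝ → ℂ) (p : ℂ) : Prop :=
  ∀ s ∈ Set.Ico (0:ℝ) 1, ∀ t ∈ Set.Ico (0:ℝ) 1, s ≠ t → f s = p → f t = p →
    det2 (deriv f s) (deriv f t) ≠ 0

/-- The set of self-intersection points of a parametrized curve. -/
def crossingSetF (f : ℝ → ℂ) : Set ℂ := {p : ℂ | 2 ≤ multF f p}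

/-- A parametrized curve is stable if its only self-intersections are finitely many
transverse double points. -/
def StableF (f : ℝ → ℂ) : Prop :=
  (crossingSetF f).Finite ∧ ∀ p : ℂ, multF f p ≤ 2 ∧ (multF f p = 2 → TransverseF f p)

/-- A planar curve is stable if its only self-intersections are transverse double points. -/
def Stable (c : PlanarCurve) : Prop := StableF c.toFun

/-- The number of crossings (self-intersection points) of a planar curve. -/
def crossings (c : PlanarCurve) : ℕ := (crossingSetF c.toFun).ncard

/-- `c` has Whitney winding number `ω`: the degree of the normalized derivative map
`S¹ → S¹`, expressed via a continuous lift of its angle. -/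
def HasWhitney (c : PlanarCurve) (ω : ℤ) : Prop :=
  ∃ θ : ℝ → ℝ, Continuous θ ∧
    (∀ t : ℝ, deriv c.toFun t = (‖deriv c.toFun t‖ : ℂ) * Complex.exp ((θ t : ℂ) * Complex.I)) ∧
    θ 1 - θ 0 = 2 * Real.pi * (ω : ℝ)

/-- `H` is a regular homotopy between parametrized curves `f` and `g`:
a continuously varying family of immersed closed curves. -/
def IsRegHomotopy (f g : ℝ → ℂ) (H : ℝ → ℝ → ℂ) : Prop :=
  (Continuous fun q : ℝ × ℝ => H q.1 q.2) ∧
  (Continuous fun q : ℝ × ℝ => deriv (H q.1) q.2) ∧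
  (∀ s : ℝ, Function.Periodic (H s) 1) ∧
  (∀ s : ℝ, ContDiff ℝ (⊤ : ℕ∞) (H s)) ∧
  (∀ s t : ℝ, deriv (H s) t ≠ 0) ∧
  H 0 = f ∧ H 1 = g

/-- Two planar curves are regularly homotopic. -/
def RegularlyHomotopic (c c' : PlanarCurve) : Prop :=
  ∃ H, IsRegHomotopy c.toFun c'.toFun H

/-- Two planar curves are homotopic through *stable* immersed curves. -/
def StablyHomotopic (c c' : PlanarCurve) : Prop :=
  ∃ H, IsRegHomotopy c.toFun c'.toFun H ∧ ∀ s ∈ Set.Icc (0:ℝ) 1, StableF (H s)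

/-- A point of a curve which is either a regular point or a transverse double point. -/
def StablePointF (f : ℝ → ℂ) (p : ℂ) : Prop :=
  multF f p ≤ 1 ∨ (multF f p = 2 ∧ TransverseF f p)

/-- A curve exhibiting a single `J`-type singularity (a first-order tangency of two
strands), all other points being stable. -/
def JSingF (f : ℝ → ℂ) : Prop :=
  ∃ p : ℂ, multF f p = 2 ∧
    (∀ s ∈ Set.Ico (0:ℝ) 1, ∀ t ∈ Set.Ico (0:ℝ) 1, s ≠ t → f s = p → f t = p →
      ∃ r : ℝ, r ≠ 0 ∧ deriv f t = (r : ℂ) * deriv f s ∧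
        det2 (deriv f s) (iteratedDeriv 2 f s) * ‖deriv f t‖ ^ 3 ≠
          (if 0 < r then 1 else -1) * det2 (deriv f t) (iteratedDeriv 2 f t) * ‖deriv f s‖ ^ 3) ∧
    (∀ q : ℂ, q ≠ p → StablePointF f q) ∧ (crossingSetF f).Finite

/-- A curve exhibiting a single `S`-type singularity (three strands meeting at one point,
pairwise transversally), all other points being stable. -/
def SSingF (f : ℝ → ℂ) : Prop :=
  ∃ p : ℂ, multF f p = 3 ∧ TransverseF f p ∧
    (∀ q : ℂ, q ≠ p → StablePointF f q) ∧ (crossingSetF f).Finite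

/-- A `J` move: a regular homotopy between stable curves passing through exactly one
singular moment, of `J`-type. -/
def JMove (c c' : PlanarCurve) : Prop :=
  c.Stable ∧ c'.Stable ∧ ∃ H, IsRegHomotopy c.toFun c'.toFun H ∧
    ∃ s₀ ∈ Set.Ioo (0:ℝ) 1, (∀ s ∈ Set.Icc (0:ℝ) 1, s ≠ s₀ → StableF (H s)) ∧ JSingF (H s₀)

/-- An `S` move: a regular homotopy between stable curves passing through exactly one
singular moment, of `S`-type. -/
def SMove (c c' : PlanarCurve) : Prop :=
  c.Stable ∧ c'.Stable ∧ ∃ H, IsRegHomotopy c.toFun c'.toFun H ∧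
    ∃ s₀ ∈ Set.Ioo (0:ℝ) 1, (∀ s ∈ Set.Icc (0:ℝ) 1, s ≠ s₀ → StableF (H s)) ∧ SSingF (H s₀)

/-- A basic move is a `J` move or an `S` move. -/
def BasicMove (c c' : PlanarCurve) : Prop := JMove c c' ∨ SMove c c'

/-- An increasing `J` move adds two crossings. -/
def IncreasingJMove (c c' : PlanarCurve) : Prop :=
  JMove c c' ∧ c'.crossings = c.crossings + 2

/-- A decreasing `J` move removes two crossings. -/
def DecreasingJMove (c c' : PlanarCurve) : Prop :=
  JMove c c' ∧ c.crossings = c'.crossings + 2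

/-- A `Z` move: the composite of an increasing `J` move, an `S` move and a decreasing
`J` move (sliding an empty 1-gon past a transverse strand). -/
def ZMove (c c' : PlanarCurve) : Prop :=
  ∃ c₁ c₂, IncreasingJMove c c₁ ∧ SMove c₁ c₂ ∧ DecreasingJMove c₂ c'

/-- A sequence of `k` basic moves leading from `c` to `c'` (allowing an initial
deformation through stable curves). -/
def ChainFromTo (c c' : PlanarCurve) (seq : ℕ → PlanarCurve) (k : ℕ) : Prop :=
  StablyHomotopic c (seq 0) ∧ seq k = c' ∧ ∀ i < k, BasicMove (seq i) (seq (i+1))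

/-- The distance between two curves: the minimal number of basic moves needed to pass
from `c` to `c'` (`⊤` if they are not regularly homotopic). -/
def dist (c c' : PlanarCurve) : ℕ∞ :=
  sInf {m : ℕ∞ | ∃ k : ℕ, m = (k : ℕ∞) ∧ ∃ seq : ℕ → PlanarCurve, ChainFromTo c c' seq k}

/-- The diameter of a set of curves. -/
def diam (A : Set PlanarCurve) : ℕ∞ := ⨆ c ∈ A, ⨆ c' ∈ A, dist c c'

/-- `B^ω_n`: the set of all stable planar curves with Whitney number `ω` and at most
`n` crossings. -/
def B (ω : ℤ) (n : ℕ) : Set PlanarCurve :=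
  {c : PlanarCurve | c.Stable ∧ c.HasWhitney ω ∧ c.crossings ≤ n}

/-- A step of the algorithm: an `S` move, a decreasing `J` move, or a `Z` move whose two
intermediate curves have at most `N` crossings; `w` is the number of basic moves used. -/
def AlgStep (N : ℕ) (c c' : PlanarCurve) (w : ℕ) : Prop :=
  (SMove c c' ∧ w = 1) ∨ (DecreasingJMove c c' ∧ w = 1) ∨
  ((∃ c₁ c₂, IncreasingJMove c c₁ ∧ SMove c₁ c₂ ∧ DecreasingJMove c₂ c' ∧
      c₁.crossings ≤ N ∧ c₂.crossings ≤ N) ∧ w = 3)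

/-! #### The invariant `f^X` -/

/-- The set of parameter pairs (in one period) realizing the double points of a curve. -/
def crossingPairsF (f : ℝ → ℂ) : Set (ℝ × ℝ) :=
  {q : ℝ × ℝ | q.1 ∈ Set.Ico (0:ℝ) 1 ∧ q.2 ∈ Set.Ico (0:ℝ) 1 ∧ q.1 < q.2 ∧ f q.1 = f q.2}

/-- The sign `i(v) ∈ {1,-1}` of a double point visited first at time `s` and then at
time `t`: `1` iff the tangents, in the order visited, form a positive basis. -/
def crossSign (f : ℝ → ℂ) (s t : ℝ) : ℤ :=
  if 0 < det2 (deriv f s) (deriv f t) then 1 else -1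

/-- The index `i(e)` of the subarc `e` of `f` on the parameter interval `(α, β)`:
the sum of the signs of the double points of `e`. -/
def arcIndex (f : ℝ → ℂ) (α β : ℝ) : ℤ :=
  ∑ᶠ q ∈ {q : ℝ × ℝ | q.1 ∈ Set.Ioo α β ∧ q.2 ∈ Set.Ioo α β ∧ q.1 < q.2 ∧ f q.1 = f q.2},
    crossSign f q.1 q.2

/-- The order one invariant `f^X(c) = ∑_v X_{a(v),b(v)} ∈ 𝕏`, where for each double
point `v` the two arcs of `c` based at `v` are ordered by the orientation of the tangents. -/
def fX (c : PlanarCurve) : FreeAbelianGroup (ℤ × ℤ) :=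
  ∑ᶠ q ∈ crossingPairsF c.toFun,
    if 0 < det2 (deriv c.toFun q.1) (deriv c.toFun q.2) then
      FreeAbelianGroup.of (arcIndex c.toFun q.1 q.2, arcIndex c.toFun q.2 (q.1 + 1))
    else
      FreeAbelianGroup.of (arcIndex c.toFun q.2 (q.1 + 1), arcIndex c.toFun q.1 q.2)

/-- The integer valued invariant `g = φ ∘ f^X`. -/
def g (c : PlanarCurve) : ℤ := phi (fX c)

/-! #### The standard curves `δ_ω` -/

/-- An explicit stable curve with winding number `m ≥ 1` and `m - 1` (inward) loops. -/
def deltaFunPos (m : ℕ) : ℝ → ℂ := fun t =>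
  Complex.exp (((2 * Real.pi * (m : ℝ) * t : ℝ) : ℂ) * Complex.I) +
    ((2 * (m : ℝ) / 3 : ℝ) : ℂ) * Complex.exp (((2 * Real.pi * t : ℝ) : ℂ) * Complex.I)

/-- The standard planar curve `δ_ω` with Whitney number `ω` and `||ω|-1|` crossings:
for `ω = 0` a figure eight, and for `ω ≠ 0` a round circle with `|ω| - 1` small loops. -/
def deltaFun (ω : ℤ) : ℝ → ℂ :=
  if ω = 0 then
    fun t => ((Real.sin (2 * Real.pi * t) : ℝ) : ℂ) + ((Real.sin (4 * Real.pi * t) : ℝ) : ℂ) * Complex.I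
  else if 0 < ω then deltaFunPos ω.toNat
  else fun t => (starRingEnd ℂ) (deltaFunPos (-ω).toNat t)

end PlanarCurve


/-! ### Spherical curves -/


/-- A closed spherical curve: a smooth immersion of the circle `ℝ/ℤ` into the unit
sphere `S² ⊆ ℝ³`. -/
structure SphericalCurve : Type where
  toFun : ℝ → EuclideanSpace ℝ (Fin 3)
  norm_one : ∀ t : ℝ, ‖toFun t‖ = 1
  periodic : Function.Periodic toFun 1
  smooth : ContDiff ℝ (⊤ : ℕ∞) toFun
  immersion : ∀ t : ℝ, deriv toFun t ≠ 0

namespace SphericalCurve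

def multF (f : ℝ → EuclideanSpace ℝ (Fin 3)) (p : EuclideanSpace ℝ (Fin 3)) : ℕ :=
  Set.ncard {t ∈ Set.Ico (0:ℝ) 1 | f t = p}

/-- Transversality of the branches at `p`: tangent vectors at `p` are pairwise
independent, detected by the `3×3` determinant with the base point `p` (the outward
normal of the sphere, fixing its orientation). -/
def TransverseF (f : ℝ → EuclideanSpace ℝ (Fin 3)) (p : EuclideanSpace ℝ (Fin 3)) : Prop :=
  ∀ s ∈ Set.Ico (0:ℝ) 1, ∀ t ∈ Set.Ico (0:ℝ) 1, s ≠ t → f s = p → f t = p →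
    det3 p (deriv f s) (deriv f t) ≠ 0

def crossingSetF (f : ℝ → EuclideanSpace ℝ (Fin 3)) : Set (EuclideanSpace ℝ (Fin 3)) :=
  {p | 2 ≤ multF f p}

def StableF (f : ℝ → EuclideanSpace ℝ (Fin 3)) : Prop :=
  (crossingSetF f).Finite ∧ ∀ p, multF f p ≤ 2 ∧ (multF f p = 2 → TransverseF f p)

def Stable (c : SphericalCurve) : Prop := StableF c.toFun

def crossings (c : SphericalCurve) : ℕ := (crossingSetF c.toFun).ncard

/-- The curve as a map into the sphere as a subtype. -/
def pt (c : SphericalCurve) (t : ℝ) : Metric.sphere (0 : EuclideanSpace ℝ (Fin 3)) 1 :=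
  ⟨c.toFun t, mem_sphere_zero_iff_norm.mpr (c.norm_one t)⟩

/-- The planar curve obtained from `c` by deleting the point `v ∈ S²` not on `c`
(stereographic projection from `v`). -/
def proj (c : SphericalCurve) (v : Metric.sphere (0 : EuclideanSpace ℝ (Fin 3)) 1) :
    ℝ → EuclideanSpace ℝ (Fin 2) :=
  haveI : Fact (Module.finrank ℝ (EuclideanSpace ℝ (Fin 3)) = 2 + 1) := ⟨by simp⟩
  fun t => stereographic' 2 v (c.pt t)

/-- `c` has (spherical) Whitney number `ω ∈ ℤ/2`: the parity of the winding number of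
the planar curve obtained by deleting from `S²` a point in the complement of `c`. -/
def HasWhitney (c : SphericalCurve) (ω : ZMod 2) : Prop :=
  ∃ v : Metric.sphere (0 : EuclideanSpace ℝ (Fin 3)) 1,
    (∀ t : ℝ, c.toFun t ≠ (v : EuclideanSpace ℝ (Fin 3))) ∧
    ∃ (m : ℤ) (θ : ℝ → ℝ), Continuous θ ∧
      (∀ t : ℝ, deriv (c.proj v) t =
        ‖deriv (c.proj v) t‖ •
          ((WithLp.equiv 2 (Fin 2 → ℝ)).symm ![Real.cos (θ t), Real.sin (θ t)])) ∧
      θ 1 - θ 0 = 2 * Real.pi * (m : ℝ) ∧ ω = (m : ZMod 2)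

def IsRegHomotopy (f g : ℝ → EuclideanSpace ℝ (Fin 3))
    (H : ℝ → ℝ → EuclideanSpace ℝ (Fin 3)) : Prop :=
  (Continuous fun q : ℝ × ℝ => H q.1 q.2) ∧
  (Continuous fun q : ℝ × ℝ => deriv (H q.1) q.2) ∧
  (∀ s t : ℝ, ‖H s t‖ = 1) ∧
  (∀ s : ℝ, Function.Periodic (H s) 1) ∧
  (∀ s : ℝ, ContDiff ℝ (⊤ : ℕ∞) (H s)) ∧
  (∀ s t : ℝ, deriv (H s) t ≠ 0) ∧
  H 0 = f ∧ H 1 = g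

def RegularlyHomotopic (c c' : SphericalCurve) : Prop :=
  ∃ H, IsRegHomotopy c.toFun c'.toFun H

def StablyHomotopic (c c' : SphericalCurve) : Prop :=
  ∃ H, IsRegHomotopy c.toFun c'.toFun H ∧ ∀ s ∈ Set.Icc (0:ℝ) 1, StableF (H s)

def StablePointF (f : ℝ → EuclideanSpace ℝ (Fin 3)) (p : EuclideanSpace ℝ (Fin 3)) : Prop :=
  multF f p ≤ 1 ∨ (multF f p = 2 ∧ TransverseF f p)

def JSingF (f : ℝ → EuclideanSpace ℝ (Fin 3)) : Prop :=
  ∃ p : EuclideanSpace ℝ (Fin 3), multF f p = 2 ∧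
    (∀ s ∈ Set.Ico (0:ℝ) 1, ∀ t ∈ Set.Ico (0:ℝ) 1, s ≠ t → f s = p → f t = p →
      ∃ r : ℝ, r ≠ 0 ∧ deriv f t = r • deriv f s ∧
        det3 p (deriv f s) (iteratedDeriv 2 f s) * ‖deriv f t‖ ^ 3 ≠
          (if 0 < r then 1 else -1) * det3 p (deriv f t) (iteratedDeriv 2 f t) * ‖deriv f s‖ ^ 3) ∧
    (∀ q, q ≠ p → StablePointF f q) ∧ (crossingSetF f).Finite

def SSingF (f : ℝ → EuclideanSpace ℝ (Fin 3)) : Prop :=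
  ∃ p : EuclideanSpace ℝ (Fin 3), multF f p = 3 ∧ TransverseF f p ∧
    (∀ q, q ≠ p → StablePointF f q) ∧ (crossingSetF f).Finite

def JMove (c c' : SphericalCurve) : Prop :=
  c.Stable ∧ c'.Stable ∧ ∃ H, IsRegHomotopy c.toFun c'.toFun H ∧
    ∃ s₀ ∈ Set.Ioo (0:ℝ) 1, (∀ s ∈ Set.Icc (0:ℝ) 1, s ≠ s₀ → StableF (H s)) ∧ JSingF (H s₀)

def SMove (c c' : SphericalCurve) : Prop :=
  c.Stable ∧ c'.Stable ∧ ∃ H, IsRegHomotopy c.toFun c'.toFun H ∧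
    ∃ s₀ ∈ Set.Ioo (0:ℝ) 1, (∀ s ∈ Set.Icc (0:ℝ) 1, s ≠ s₀ → StableF (H s)) ∧ SSingF (H s₀)

def BasicMove (c c' : SphericalCurve) : Prop := JMove c c' ∨ SMove c c'

def IncreasingJMove (c c' : SphericalCurve) : Prop :=
  JMove c c' ∧ c'.crossings = c.crossings + 2

def DecreasingJMove (c c' : SphericalCurve) : Prop :=
  JMove c c' ∧ c.crossings = c'.crossings + 2

def ZMove (c c' : SphericalCurve) : Prop :=
  ∃ c₁ c₂, IncreasingJMove c c₁ ∧ SMove c₁ c₂ ∧ DecreasingJMove c₂ c'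

def ChainFromTo (c c' : SphericalCurve) (seq : ℕ → SphericalCurve) (k : ℕ) : Prop :=
  StablyHomotopic c (seq 0) ∧ seq k = c' ∧ ∀ i < k, BasicMove (seq i) (seq (i+1))

def dist (c c' : SphericalCurve) : ℕ∞ :=
  sInf {m : ℕ∞ | ∃ k : ℕ, m = (k : ℕ∞) ∧ ∃ seq : ℕ → SphericalCurve, ChainFromTo c c' seq k}

def diam (A : Set SphericalCurve) : ℕ∞ := ⨆ c ∈ A, ⨆ c' ∈ A, dist c c'

def B (ω : ZMod 2) (n : ℕ) : Set SphericalCurve :=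
  {c : SphericalCurve | c.Stable ∧ c.HasWhitney ω ∧ c.crossings ≤ n}

def AlgStep (N : ℕ) (c c' : SphericalCurve) (w : ℕ) : Prop :=
  (SMove c c' ∧ w = 1) ∨ (DecreasingJMove c c' ∧ w = 1) ∨
  ((∃ c₁ c₂, IncreasingJMove c c₁ ∧ SMove c₁ c₂ ∧ DecreasingJMove c₂ c' ∧
      c₁.crossings ≤ N ∧ c₂.crossings ≤ N) ∧ w = 3)

/-! #### The invariant `f^X` for spherical curves -/

def crossingPairsF (f : ℝ → EuclideanSpace ℝ (Fin 3)) : Set (ℝ × ℝ) :=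
  {q : ℝ × ℝ | q.1 ∈ Set.Ico (0:ℝ) 1 ∧ q.2 ∈ Set.Ico (0:ℝ) 1 ∧ q.1 < q.2 ∧ f q.1 = f q.2}

def crossSign (f : ℝ → EuclideanSpace ℝ (Fin 3)) (s t : ℝ) : ℤ :=
  if 0 < det3 (f s) (deriv f s) (deriv f t) then 1 else -1

def arcIndex (f : ℝ → EuclideanSpace ℝ (Fin 3)) (α β : ℝ) : ℤ :=
  ∑ᶠ q ∈ {q : ℝ × ℝ | q.1 ∈ Set.Ioo α β ∧ q.2 ∈ Set.Ioo α β ∧ q.1 < q.2 ∧ f q.1 = f q.2},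
    crossSign f q.1 q.2

def fX (c : SphericalCurve) : FreeAbelianGroup (ℤ × ℤ) :=
  ∑ᶠ q ∈ crossingPairsF c.toFun,
    if 0 < det3 (c.toFun q.1) (deriv c.toFun q.1) (deriv c.toFun q.2) then
      FreeAbelianGroup.of (arcIndex c.toFun q.1 q.2, arcIndex c.toFun q.2 (q.1 + 1))
    else
      FreeAbelianGroup.of (arcIndex c.toFun q.2 (q.1 + 1), arcIndex c.toFun q.1 q.2)

def g (c : SphericalCurve) : ℤ := phi (fX c)

/-- Inverse stereographic projection `ℂ → S²` from the north pole. -/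
def stereoInv (z : ℂ) : EuclideanSpace ℝ (Fin 3) :=
  (WithLp.equiv 2 (Fin 3 → ℝ)).symm
    ![2 * z.re / (Complex.normSq z + 1), 2 * z.im / (Complex.normSq z + 1),
      (Complex.normSq z - 1) / (Complex.normSq z + 1)]

/-- The standard spherical curves `δ_0` (one crossing) and `δ_1` (embedded):
the images in `S²` of the standard planar curves `δ_0`, `δ_1`. -/
def deltaFun (ω : ZMod 2) : ℝ → EuclideanSpace ℝ (Fin 3) :=
  fun t => stereoInv (PlanarCurve.deltaFun (if ω = 0 then 0 else 1) t)

end SphericalCurve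


/-- The determinant of two vectors in `ℝ × ℝ`. -/
def det2P (u v : ℝ × ℝ) : ℝ := u.1 * v.2 - u.2 * v.1

/-- The closed region bounded by a subset of the plane: the set together with all the
bounded connected components of its complement. -/
def closedRegion (S : Set ℂ) : Set ℂ :=
  S ∪ {p : ℂ | p ∉ S ∧ Bornology.IsBounded (connectedComponentIn Sᶜ p)}

/-!
The velocity of a regular homotopy has a continuous angle over the whole parameter plane. The
increment of that angle over a period is a multiple of `2π` depending continuously on the homotopy
parameter, hence constant.

Conversely, given equal winding numbers, write both velocities in polar form and interpolate speeds
and angles linearly; equality of the winding numbers makes the intermediate velocities periodic.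
They need not integrate to zero, but a velocity `w` with nonconstant angle satisfies
`‖∫ w‖ < ∫ ‖w‖`, so subtracting `‖w‖ (∫ w) / ∫ ‖w‖` makes the integral vanish without creating a
zero, and the primitives form a regular homotopy. The interpolated angle could be constant only for
winding number zero, and then adding a multiple of `s (1 - s) θ²` to it, with `θ` the angle of the
first curve, prevents this.
-/

section AngleLifts

open Complex

variable {X Y : Type*} [TopologicalSpace X] [TopologicalSpace Y]

theorem eq_of_forall_mem_zmultiples {S : Set X} (hS : IsPreconnected S) {f : X → ℝ}
    (hf : ContinuousOn f S) {p : ℝ} (hp : ∀ x ∈ S, f x ∈ AddSubgroup.zmultiples p)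
    {x y : X} (hx : x ∈ S) (hy : y ∈ S) : f x = f y :=
  hS.constant_of_mapsTo (T := (AddSubgroup.zmultiples p : Set ℝ))
    ⟨inferInstanceAs (DiscreteTopology (AddSubgroup.zmultiples p))⟩ hf hp hx hy

/-- `θ` is a continuous determination of the angle of the planar vector field `v`: a lift of
`v / ‖v‖` along `θ ↦ e ^ (iθ)`. At a zero of `v` the equation puts no constraint on `θ`. -/
structure IsAngleLift (v : X → ℂ) (θ : X → ℝ) : Prop where
  continuous : Continuous θ
  eq_norm_mul_exp : ∀ x, v x = (‖v x‖ : ℂ) * exp (θ x * I)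

theorem isAngleLift_mul_exp {ρ θ : X → ℝ} (hρ : ∀ x, 0 ≤ ρ x) (hθ : Continuous θ) :
    IsAngleLift (fun x => (ρ x : ℂ) * exp (θ x * I)) θ where
  continuous := hθ
  eq_norm_mul_exp x := by
    rw [norm_mul, norm_exp_ofReal_mul_I, mul_one, norm_real, Real.norm_of_nonneg (hρ x)]

theorem exists_isAngleLift [SimplyConnectedSpace X] [LocallyPathConnectedSpace X] {v : X → ℂ}
    (hv : Continuous v) (hv₀ : ∀ x, v x ≠ 0) : ∃ θ, IsAngleLift v θ := by
  have x₀ : X := Classical.arbitrary X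
  obtain ⟨L, ⟨-, hL⟩, -⟩ := isCoveringMapOn_exp.existsUnique_continuousMap_lifts ⟨v, hv⟩
    (exp_log (hv₀ x₀)) hv₀
  refine ⟨fun x => (L x).im, by fun_prop, fun x => ?_⟩
  have hx : exp (L x) = v x := congrFun hL x
  rw [← hx, norm_exp, ofReal_exp, ← exp_add, re_add_im]

namespace IsAngleLift

variable {v : X → ℂ} {θ : X → ℝ}

theorem comp (h : IsAngleLift v θ) {f : Y → X} (hf : Continuous f) :
    IsAngleLift (fun y => v (f y)) fun y => θ (f y) :=
  ⟨h.continuous.comp hf, fun y => h.eq_norm_mul_exp (f y)⟩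

theorem coe_angle_eq_arg (h : IsAngleLift v θ) {x : X} (hx : v x ≠ 0) :
    (θ x : Real.Angle) = (v x).arg := by
  rw [h.eq_norm_mul_exp x, arg_real_mul _ (norm_pos_iff.2 hx), arg_exp_mul_I,
    Real.Angle.coe_toIocMod]

theorem sub_mem_zmultiples_of_sameRay {w : Y → ℂ} {φ : Y → ℝ} (hθ : IsAngleLift v θ)
    (hφ : IsAngleLift w φ) {x : X} {y : Y} (hx : v x ≠ 0) (hy : w y ≠ 0)
    (hxy : SameRay ℝ (v x) (w y)) : θ x - φ y ∈ AddSubgroup.zmultiples (2 * Real.pi) := by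
  have harg : (v x).arg = (w y).arg := ((sameRay_iff.1 hxy).resolve_left hx).resolve_left hy
  refine QuotientAddGroup.eq_iff_sub_mem.1 ?_
  exact (hθ.coe_angle_eq_arg hx).trans <|
    (congrArg _ harg).trans (hφ.coe_angle_eq_arg hy).symm

theorem sub_eq_sub [PreconnectedSpace X] {φ : X → ℝ} (hθ : IsAngleLift v θ)
    (hφ : IsAngleLift v φ) (hv : ∀ x, v x ≠ 0) (x y : X) : θ x - θ y = φ x - φ y := by
  have hconst : θ x - φ x = θ y - φ y :=
    eq_of_forall_mem_zmultiples isPreconnected_univ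
      (hθ.continuous.sub hφ.continuous).continuousOn
      (fun z _ => hθ.sub_mem_zmultiples_of_sameRay hφ (hv z) (hv z) (SameRay.refl _))
      (mem_univ x) (mem_univ y)
  linarith

theorem eq_of_forall_sameRay {S : Set X} (hS : IsPreconnected S) (h : IsAngleLift v θ)
    (hv : ∀ x, v x ≠ 0) (hray : ∀ x ∈ S, ∀ y ∈ S, SameRay ℝ (v x) (v y)) {x y : X}
    (hx : x ∈ S) (hy : y ∈ S) : θ x = θ y := by
  have hconst := eq_of_forall_mem_zmultiples hS (h.continuous.sub continuous_const).continuousOn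
    (fun z hz => h.sub_mem_zmultiples_of_sameRay h (hv z) (hv y) (hray z hz y hy)) hx hy
  exact sub_left_injective hconst

theorem add_period {v : ℝ → ℂ} {θ : ℝ → ℝ} (h : IsAngleLift v θ) (hv : ∀ t, v t ≠ 0) {T : ℝ}
    (hT : Function.Periodic v T) (t : ℝ) : θ (t + T) = θ t + (θ T - θ 0) := by
  have hshift : IsAngleLift v fun t => θ (t + T) := by
    simpa only [hT _] using h.comp (continuous_add_const T)
  have := hshift.sub_eq_sub h hv t 0
  rw [zero_add] at this
  linarith

theorem sub_eq_sub_of_homotopy {V : ℝ → ℝ → ℂ} (hV : Continuous fun q : ℝ × ℝ => V q.1 q.2)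
    (hV₀ : ∀ s t, V s t ≠ 0) {a b : ℝ} (hclosed : ∀ s, V s a = V s b) {r s : ℝ}
    {θ φ : ℝ → ℝ} (hθ : IsAngleLift (V r) θ) (hφ : IsAngleLift (V s) φ) :
    θ b - θ a = φ b - φ a := by
  obtain ⟨Θ, hΘ⟩ := exists_isAngleLift hV fun q => hV₀ q.1 q.2
  have hslice (s : ℝ) : IsAngleLift (V s) fun t => Θ (s, t) :=
    hΘ.comp (f := fun t => (s, t)) (by fun_prop)
  have hmem (s : ℝ) : Θ (s, b) - Θ (s, a) ∈ AddSubgroup.zmultiples (2 * Real.pi) :=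
    (hslice s).sub_mem_zmultiples_of_sameRay (hslice s) (hV₀ s b) (hV₀ s a)
      (hclosed s ▸ SameRay.refl _)
  have hcont : Continuous fun s => Θ (s, b) - Θ (s, a) := by
    have := hΘ.continuous
    fun_prop
  calc θ b - θ a = Θ (r, b) - Θ (r, a) := hθ.sub_eq_sub (hslice r) (hV₀ r) b a
    _ = Θ (s, b) - Θ (s, a) :=
      eq_of_forall_mem_zmultiples isPreconnected_univ hcont.continuousOn
        (fun s _ => hmem s) (mem_univ r) (mem_univ s)
    _ = φ b - φ a := (hslice s).sub_eq_sub hφ (hV₀ s) b a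

theorem eventually_log_div_im (h : IsAngleLift v θ) (hv : ∀ x, v x ≠ 0) (x₀ : X) :
    ∀ᶠ x in nhds x₀, (log (v x / v x₀)).im = θ x - θ x₀ := by
  have hsmall : ∀ᶠ x in nhds x₀, θ x - θ x₀ ∈ Ioo (-Real.pi) Real.pi :=
    (h.continuous.sub continuous_const).continuousAt.eventually_mem <|
      Ioo_mem_nhds (by simpa using Real.pi_pos) (by simpa using Real.pi_pos)
  filter_upwards [hsmall] with x hx
  have hdiv : v x / v x₀ = ((‖v x‖ / ‖v x₀‖ : ℝ) : ℂ) * exp ((θ x - θ x₀ : ℝ) * I) := by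
    rw [h.eq_norm_mul_exp x, h.eq_norm_mul_exp x₀, mul_div_mul_comm, ← exp_sub]
    simp [sub_mul]
  rw [hdiv, log_im,
    arg_real_mul _ (div_pos (norm_pos_iff.2 (hv x)) (norm_pos_iff.2 (hv x₀))), arg_exp_mul_I,
    (toIocMod_eq_self _).2]
  exact ⟨hx.1, by linarith [hx.2]⟩

theorem contDiff {E : Type*} [NormedAddCommGroup E] [NormedSpace ℝ E] {v : E → ℂ} {θ : E → ℝ}
    (h : IsAngleLift v θ) {n : WithTop ℕ∞} (hv : ContDiff ℝ n v) (hv₀ : ∀ x, v x ≠ 0) :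
    ContDiff ℝ n θ := by
  refine contDiff_iff_contDiffAt.2 fun x₀ => ?_
  have hone : v x₀ / v x₀ ∈ slitPlane := by simp [hv₀ x₀]
  have hlog : ContDiffAt ℝ n (fun x => log (v x / v x₀)) x₀ :=
    ((contDiffAt_log hone).restrict_scalars ℝ).fun_comp x₀ (hv.div_const _).contDiffAt
  have him : ContDiffAt ℝ n (fun x => θ x₀ + (log (v x / v x₀)).im) x₀ :=
    contDiffAt_const.add (imCLM.contDiff.contDiffAt.comp x₀ hlog)
  refine him.congr_of_eventuallyEq ?_
  filter_upwards [h.eventually_log_div_im hv₀ x₀] with x hx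
  rw [hx, add_sub_cancel]

end IsAngleLift

end AngleLifts

section ClosingUp

open intervalIntegral

variable {E : Type*} [NormedAddCommGroup E] [NormedSpace ℝ E]

-- A norming functional `g` of the integral satisfies `g (f x) < ‖f x‖` at `s` or at `t`: equality
-- at both would give `‖f s + f t‖ = ‖f s‖ + ‖f t‖`.
theorem norm_integral_lt_integral_norm_of_not_sameRay [CompleteSpace E] [StrictConvexSpace ℝ E]
    {f : ℝ → E} {a b s t : ℝ} (hf : ContinuousOn f (Icc a b)) (hs : s ∈ Icc a b)
    (ht : t ∈ Icc a b) (hst : ¬SameRay ℝ (f s) (f t)) :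
    ‖∫ x in a..b, f x‖ < ∫ x in a..b, ‖f x‖ := by
  have hab : a < b := lt_of_not_ge fun hba =>
    hst (subsingleton_Icc_of_ge hba hs ht ▸ SameRay.refl _)
  obtain ⟨g, hg, hgZ⟩ := exists_dual_vector'' ℝ (∫ x in a..b, f x)
  have hle (z : E) : g z ≤ ‖z‖ := (le_abs_self _).trans (by simpa using g.le_of_opNorm_le hg z)
  have hlt : ∃ x ∈ Icc a b, g (f x) < ‖f x‖ := by
    by_contra! hge
    refine hst (sameRay_iff_norm_add.2 ((norm_add_le _ _).antisymm ?_))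
    calc ‖f s‖ + ‖f t‖ ≤ g (f s) + g (f t) := add_le_add (hge s hs) (hge t ht)
      _ = g (f s + f t) := (map_add g _ _).symm
      _ ≤ ‖f s + f t‖ := hle _
  calc ‖∫ x in a..b, f x‖ = ∫ x in a..b, g (f x) := by
        rw [g.intervalIntegral_comp_comm (hf.intervalIntegrable_of_Icc hab.le), hgZ,
          RCLike.ofReal_real_eq_id, id]
    _ < ∫ x in a..b, ‖f x‖ :=
      integral_lt_integral_of_continuousOn_of_le_of_exists_lt hab
        (g.continuous.comp_continuousOn hf) hf.norm (fun x _ => hle (f x)) hlt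

theorem IsAngleLift.norm_integral_lt_integral_norm {v : ℝ → ℂ} {θ : ℝ → ℝ} {a b : ℝ}
    (h : IsAngleLift v θ) (hv : Continuous v) (hv₀ : ∀ t, v t ≠ 0)
    (hθ : (θ '' Icc a b).Nontrivial) : ‖∫ t in a..b, v t‖ < ∫ t in a..b, ‖v t‖ := by
  obtain ⟨_, ⟨s, hs, rfl⟩, _, ⟨t, ht, rfl⟩, hst⟩ := hθ
  by_contra hge
  refine hst (h.eq_of_forall_sameRay isPreconnected_Icc hv₀ (fun x hx y hy => ?_) hs ht)
  by_contra hxy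
  exact hge (norm_integral_lt_integral_norm_of_not_sameRay hv.continuousOn hx hy hxy)

theorem IsAngleLift.nontrivial_image_of_integral_eq_zero {v : ℝ → ℂ} {θ : ℝ → ℝ} {a b : ℝ}
    (h : IsAngleLift v θ) (hab : a < b) (hv : Continuous v) (hv₀ : ∀ t, v t ≠ 0)
    (hint : ∫ t in a..b, v t = 0) : (θ '' Icc a b).Nontrivial := by
  by_contra hconst
  rw [not_nontrivial_iff] at hconst
  have hray : ∀ t ∈ uIcc a b, v t = ‖v t‖ * Complex.exp (θ a * Complex.I) := fun t ht => by
    rw [uIcc_of_le hab.le] at ht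
    rw [← hconst (mem_image_of_mem θ ht) (mem_image_of_mem θ (left_mem_Icc.2 hab.le))]
    exact h.eq_norm_mul_exp t
  have hpos : 0 < ∫ t in a..b, ‖v t‖ :=
    intervalIntegral_pos_of_pos (hv.norm.intervalIntegrable _ _)
      (fun t => norm_pos_iff.2 (hv₀ t)) hab
  rw [integral_congr hray, integral_mul_const, integral_ofReal] at hint
  exact hpos.ne' (by simpa using hint)

/-- The velocity `w`, corrected by the multiple of `‖w‖` that makes its integral over a period
vanish, so that `w` becomes the velocity of a closed curve. -/
def balance (w : ℝ → E) (t : ℝ) : E :=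
  w t - ‖w t‖ • (∫ x in (0 : ℝ)..1, ‖w x‖)⁻¹ • ∫ x in (0 : ℝ)..1, w x

theorem balance_eq_self {w : ℝ → E} (hw : ∫ x in (0 : ℝ)..1, w x = 0) : balance w = w := by
  ext t
  simp [balance, hw]

theorem balance_periodic {w : ℝ → E} {T : ℝ} (hw : Function.Periodic w T) :
    Function.Periodic (balance w) T := fun t => by
  simp only [balance, hw t]

theorem balance_ne_zero {w : ℝ → E} {t : ℝ} (ht : w t ≠ 0)
    (hlt : ‖∫ x in (0 : ℝ)..1, w x‖ < ∫ x in (0 : ℝ)..1, ‖w x‖) : balance w t ≠ 0 := by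
  have hM : 0 < ∫ x in (0 : ℝ)..1, ‖w x‖ := (norm_nonneg _).trans_lt hlt
  refine sub_ne_zero.2 fun heq => (lt_irrefl ‖w t‖) ?_
  calc ‖w t‖ = ‖w t‖ * ((∫ x in (0 : ℝ)..1, ‖w x‖)⁻¹ * ‖∫ x in (0 : ℝ)..1, w x‖) := by
        conv_lhs => rw [heq]
        rw [norm_smul, norm_smul, norm_norm, norm_inv, Real.norm_of_nonneg hM.le]
    _ < ‖w t‖ := mul_lt_of_lt_one_right (norm_pos_iff.2 ht) ((inv_mul_lt_one₀ hM).2 hlt)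

theorem integral_balance [CompleteSpace E] {w : ℝ → E} (hw : Continuous w)
    (hM : ∫ x in (0 : ℝ)..1, ‖w x‖ ≠ 0) : ∫ t in (0 : ℝ)..1, balance w t = 0 := by
  simp only [balance]
  rw [integral_sub (hw.intervalIntegrable _ _)
    (Continuous.intervalIntegrable (by fun_prop) _ _), intervalIntegral.integral_smul_const,
    smul_inv_smul₀ hM, sub_self]

theorem contDiff_balance {F : Type*} [NormedAddCommGroup F] [InnerProductSpace ℝ F] {w : ℝ → F}
    {n : WithTop ℕ∞} (hw : ContDiff ℝ n w) (hw₀ : ∀ t, w t ≠ 0) : ContDiff ℝ n (balance w) :=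
  hw.sub ((hw.norm ℝ hw₀).smul contDiff_const)

theorem continuous_balance {X : Type*} [TopologicalSpace X] {W : X → ℝ → E}
    (hW : Continuous fun q : X × ℝ => W q.1 q.2) (hM : ∀ x, ∫ t in (0 : ℝ)..1, ‖W x t‖ ≠ 0) :
    Continuous fun q : X × ℝ => balance (W q.1) q.2 := by
  have hint : Continuous fun x => ∫ t in (0 : ℝ)..1, W x t :=
    continuous_parametric_intervalIntegral_of_continuous' hW 0 1
  have hnorm : Continuous fun x => ∫ t in (0 : ℝ)..1, ‖W x t‖ :=
    continuous_parametric_intervalIntegral_of_continuous' hW.norm 0 1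
  exact hW.sub (hW.norm.smul (((hnorm.inv₀ hM).smul hint).comp continuous_fst))

theorem hasDerivAt_const_add_integral [CompleteSpace E] {v : ℝ → E} (hv : Continuous v) (z : E)
    (a t : ℝ) : HasDerivAt (fun t => z + ∫ x in a..t, v x) (v t) t :=
  (hv.integral_hasStrictDerivAt a t).hasDerivAt.const_add z

theorem contDiff_const_add_integral [CompleteSpace E] {v : ℝ → E} (hv : ContDiff ℝ (⊤ : ℕ∞) v)
    (z : E) (a : ℝ) : ContDiff ℝ (⊤ : ℕ∞) fun t => z + ∫ x in a..t, v x := by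
  have hderiv := hasDerivAt_const_add_integral hv.continuous z a
  rw [contDiff_infty_iff_deriv, funext fun t => (hderiv t).deriv]
  exact ⟨fun t => (hderiv t).differentiableAt, hv⟩

theorem periodic_const_add_integral {v : ℝ → E} (hv : Continuous v) {T : ℝ}
    (hT : Function.Periodic v T) (hint : ∫ x in (0 : ℝ)..T, v x = 0) (z : E) (a : ℝ) :
    Function.Periodic (fun t => z + ∫ x in a..t, v x) T := fun t => by
  have hperiod : ∫ x in t..t + T, v x = 0 := by
    rw [hT.intervalIntegral_add_eq t 0, zero_add, hint]
  simp only
  rw [← integral_add_adjacent_intervals (hv.intervalIntegrable a t)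
    (hv.intervalIntegrable t (t + T)), hperiod, add_zero]

end ClosingUp

section BentSegments

/-- The segment `(1 - s) f + s g` from `f` to `g`, bent away from the straight one in the direction
`χ` with its ends fixed. -/
def bentSegment {X : Type*} (f g χ : X → ℝ) (s : ℝ) (x : X) : ℝ :=
  (1 - s) * f x + s * g x + s * (1 - s) * χ x

theorem bentSegment_zero {X : Type*} (f g χ : X → ℝ) : bentSegment f g χ 0 = f := by
  ext x
  simp [bentSegment]

theorem bentSegment_one {X : Type*} (f g χ : X → ℝ) : bentSegment f g χ 1 = g := by
  ext x
  simp [bentSegment]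

theorem bentSegment_add {f g χ : ℝ → ℝ} {T d : ℝ} (hf : ∀ t, f (t + T) = f t + d)
    (hg : ∀ t, g (t + T) = g t + d) (hχ : Function.Periodic χ T) (s t : ℝ) :
    bentSegment f g χ s (t + T) = bentSegment f g χ s t + d := by
  simp only [bentSegment, hf, hg, hχ t]
  ring

theorem continuous_bentSegment {X : Type*} [TopologicalSpace X] {f g χ : X → ℝ}
    (hf : Continuous f) (hg : Continuous g) (hχ : Continuous χ) :
    Continuous fun q : ℝ × X => bentSegment f g χ q.1 q.2 := by
  unfold bentSegment
  fun_prop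

theorem contDiff_bentSegment {E : Type*} [NormedAddCommGroup E] [NormedSpace ℝ E]
    {f g χ : E → ℝ} {n : WithTop ℕ∞} (hf : ContDiff ℝ n f) (hg : ContDiff ℝ n g)
    (hχ : ContDiff ℝ n χ) (s : ℝ) : ContDiff ℝ n (bentSegment f g χ s) := by
  unfold bentSegment
  fun_prop

theorem bentSegment_pos {X : Type*} {f g χ : X → ℝ} {x : X} (hf : 0 < f x) (hg : 0 < g x)
    (hχ : 0 ≤ χ x) {s : ℝ} (hs : s ∈ Icc (0 : ℝ) 1) : 0 < bentSegment f g χ s x := by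
  have hconvex : 0 < (1 - s) * f x + s * g x :=
    convex_Ioi (0 : ℝ) hf hg (sub_nonneg.2 hs.2) hs.1 (sub_add_cancel 1 s)
  exact add_pos_of_pos_of_nonneg hconvex
    (mul_nonneg (mul_nonneg hs.1 (sub_nonneg.2 hs.2)) hχ)

theorem quadratic_coeff_eq_zero_of_infinite {R : Type*} [CommRing R] [IsDomain R] {a b c : R}
    {S : Set R} (hS : S.Infinite) (h : ∀ y ∈ S, a * y ^ 2 + b * y + c = 0) : a = 0 := by
  open Polynomial in
  have hzero : C a * X ^ 2 + C b * X + C c = 0 :=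
    eq_zero_of_infinite_isRoot _ (hS.mono fun y hy => by simpa using h y hy)
  simpa [Polynomial.coeff_X, Polynomial.coeff_C] using congrArg (Polynomial.coeff · 2) hzero

variable {X : Type*} [TopologicalSpace X] {S : Set X} {f g : X → ℝ}

-- Where the straight segment degenerates, `g` is an affine function of `f` on `S`, so being
-- constant on `S` for the bent one is a quadratic equation for the infinitely many values of `f`.
theorem eq_zero_or_eq_one_of_subsingleton_image_bentSegment (hS : IsPreconnected S)
    (hf : ContinuousOn f S) (hf₁ : (f '' S).Nontrivial) {r s : ℝ}
    (hr : (bentSegment f g 0 r '' S).Subsingleton)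
    (hs : (bentSegment f g (f ^ 2) s '' S).Subsingleton) : s = 0 ∨ s = 1 := by
  have hr₀ : r ≠ 0 := by
    rintro rfl
    rw [bentSegment_zero] at hr
    exact hf₁.not_subsingleton hr
  obtain ⟨x₀, hx₀⟩ := hf₁.nonempty.of_image
  have hquad : ∀ y ∈ f '' S, r * s * (1 - s) * y ^ 2 + (r * (1 - s) - s * (1 - r)) * y +
      -(r * s * (1 - s) * f x₀ ^ 2 + (r * (1 - s) - s * (1 - r)) * f x₀) = 0 := by
    rintro _ ⟨x, hx, rfl⟩
    have hrx := hr (mem_image_of_mem _ hx) (mem_image_of_mem _ hx₀)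
    have hsx := hs (mem_image_of_mem _ hx) (mem_image_of_mem _ hx₀)
    simp only [bentSegment, Pi.zero_apply, Pi.pow_apply] at hrx hsx
    linear_combination r * hsx - s * hrx
  have hlead := quadratic_coeff_eq_zero_of_infinite
    ((hS.image f hf).infinite_of_nontrivial hf₁) hquad
  simpa [hr₀, sub_eq_zero, eq_comm (a := (1 : ℝ))] using hlead

theorem exists_nontrivial_image_bentSegment (hS : IsPreconnected S) (hf : ContinuousOn f S)
    (hf₁ : (f '' S).Nontrivial) (hg₁ : (g '' S).Nontrivial) :
    ∃ ε : ℝ, ∀ s ∈ Icc (0 : ℝ) 1, (bentSegment f g (ε • f ^ 2) s '' S).Nontrivial := by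
  by_cases hstraight : ∀ s ∈ Icc (0 : ℝ) 1, (bentSegment f g 0 s '' S).Nontrivial
  · exact ⟨0, by simpa only [zero_smul] using hstraight⟩
  push Not at hstraight
  obtain ⟨r, -, hr⟩ := hstraight
  refine ⟨1, fun s _ => ?_⟩
  rw [one_smul]
  by_contra hs
  rw [not_nontrivial_iff] at hs
  rcases eq_zero_or_eq_one_of_subsingleton_image_bentSegment hS hf hf₁ hr hs with rfl | rfl
  · rw [bentSegment_zero] at hs
    exact hf₁.not_subsingleton hs
  · rw [bentSegment_one] at hs
    exact hg₁.not_subsingleton hs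

theorem exists_periodic_bend {θ₀ θ₁ : ℝ → ℝ} {T d : ℝ} {n : WithTop ℕ∞}
    (hθ₀ : ContDiff ℝ n θ₀) (hT₀ : ∀ t, θ₀ (t + T) = θ₀ t + d)
    (hT₁ : ∀ t, θ₁ (t + T) = θ₁ t + d) (hn₀ : (θ₀ '' Icc 0 T).Nontrivial)
    (hn₁ : (θ₁ '' Icc 0 T).Nontrivial) :
    ∃ χ : ℝ → ℝ, ContDiff ℝ n χ ∧ Function.Periodic χ T ∧
      ∀ s ∈ Icc (0 : ℝ) 1, (bentSegment θ₀ θ₁ χ s '' Icc 0 T).Nontrivial := by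
  rcases eq_or_ne d 0 with rfl | hd
  · obtain ⟨ε, hε⟩ := exists_nontrivial_image_bentSegment isPreconnected_Icc
      hθ₀.continuous.continuousOn hn₀ hn₁
    exact ⟨ε • θ₀ ^ 2, (hθ₀.pow 2).const_smul ε, fun t => by simp [hT₀ t], hε⟩
  · have hT : 0 ≤ T := nonempty_Icc.1 hn₀.nonempty.of_image
    have hzero : Function.Periodic (0 : ℝ → ℝ) T := fun _ => rfl
    refine ⟨0, contDiff_const, hzero, fun s _ =>
      ⟨_, ⟨0, left_mem_Icc.2 hT, rfl⟩, _, ⟨T, right_mem_Icc.2 hT, rfl⟩, fun heq => hd ?_⟩⟩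
    have hend := bentSegment_add hT₀ hT₁ hzero s 0
    rw [zero_add] at hend
    linarith

end BentSegments

theorem periodic_deriv {E : Type*} [NormedAddCommGroup E] [NormedSpace ℝ E] {f : ℝ → E} {T : ℝ}
    (hf : Function.Periodic f T) : Function.Periodic (deriv f) T := fun t => by
  rw [← deriv_comp_add_const, hf.funext]

namespace PlanarCurve

theorem contDiff_deriv (c : PlanarCurve) : ContDiff ℝ (⊤ : ℕ∞) (deriv c.toFun) :=
  (contDiff_infty_iff_deriv.1 c.smooth).2

theorem integral_deriv (c : PlanarCurve) (a b : ℝ) :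
    ∫ t in a..b, deriv c.toFun t = c.toFun b - c.toFun a :=
  intervalIntegral.integral_deriv_eq_sub
    (fun _ _ => (c.smooth.differentiable (by simp)).differentiableAt)
    (c.contDiff_deriv.continuous.intervalIntegrable _ _)

theorem integral_deriv_period (c : PlanarCurve) : ∫ t in (0 : ℝ)..1, deriv c.toFun t = 0 := by
  rw [c.integral_deriv, ← c.periodic 0, zero_add, sub_self]

theorem HasWhitney.exists_isAngleLift {c : PlanarCurve} {ω : ℤ} (h : c.HasWhitney ω) :
    ∃ θ, IsAngleLift (deriv c.toFun) θ ∧ θ 1 - θ 0 = 2 * Real.pi * ω := by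
  obtain ⟨θ, hθ, heq, hω⟩ := h
  exact ⟨θ, ⟨hθ, heq⟩, hω⟩

theorem HasWhitney.eq_of_regularlyHomotopic {c c' : PlanarCurve} {ω ω' : ℤ}
    (hω : c.HasWhitney ω) (hω' : c'.HasWhitney ω') (h : RegularlyHomotopic c c') : ω = ω' := by
  obtain ⟨θ, hθ, hθω⟩ := hω.exists_isAngleLift
  obtain ⟨θ', hθ', hθω'⟩ := hω'.exists_isAngleLift
  obtain ⟨H, -, hderiv, hper, -, himm, hH₀, hH₁⟩ := h
  rw [← hH₀] at hθ
  rw [← hH₁] at hθ'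
  have hclosed (s : ℝ) : deriv (H s) 0 = deriv (H s) 1 := by
    rw [← periodic_deriv (hper s) 0, zero_add]
  have hturn := IsAngleLift.sub_eq_sub_of_homotopy hderiv himm hclosed hθ hθ'
  rw [hθω, hθω'] at hturn
  exact_mod_cast mul_left_cancel₀ Real.two_pi_pos.ne' hturn

theorem regularlyHomotopic_of_balanced_velocity {c c' : PlanarCurve} {V : ℝ → ℝ → ℂ}
    (hV : Continuous fun q : ℝ × ℝ => V q.1 q.2) (hsmooth : ∀ s, ContDiff ℝ (⊤ : ℕ∞) (V s))
    (hper : ∀ s, Function.Periodic (V s) 1) (hV₀ : ∀ s t, V s t ≠ 0)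
    (hint : ∀ s, ∫ t in (0 : ℝ)..1, V s t = 0) (hc : V 0 = deriv c.toFun)
    (hc' : V 1 = deriv c'.toFun) : RegularlyHomotopic c c' := by
  let base : ℝ → ℂ := AffineMap.lineMap (c.toFun 0) (c'.toFun 0)
  have hderiv (s : ℝ) : deriv (fun t => base s + ∫ x in (0 : ℝ)..t, V s x) = V s :=
    funext fun t => (hasDerivAt_const_add_integral (hsmooth s).continuous _ 0 t).deriv
  refine ⟨fun s t => base s + ∫ x in (0 : ℝ)..t, V s x, ?_, ?_, fun s => ?_, fun s => ?_,
    fun s t => ?_, ?_, ?_⟩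
  · have hbase : Continuous base := AffineMap.lineMap_continuous
    have hprim : Continuous fun q : ℝ × ℝ => ∫ x in (0 : ℝ)..q.2, V q.1 x :=
      intervalIntegral.continuous_parametric_intervalIntegral_of_continuous
        (f := fun q : ℝ × ℝ => V q.1)
        (hV.comp (continuous_fst.prodMap continuous_id)) continuous_snd
    exact (hbase.comp continuous_fst).add hprim
  · simpa only [hderiv] using hV
  · exact periodic_const_add_integral (hsmooth s).continuous (hper s) (hint s) _ 0
  · exact contDiff_const_add_integral (hsmooth s) _ 0
  · rw [hderiv]
    exact hV₀ s t
  · ext t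
    simp [base, hc, c.integral_deriv]
  · ext t
    simp [base, hc', c'.integral_deriv]

theorem regularlyHomotopic_of_velocity {c c' : PlanarCurve} {W : ℝ → ℝ → ℂ}
    (hW : Continuous fun q : ℝ × ℝ => W q.1 q.2) (hsmooth : ∀ s, ContDiff ℝ (⊤ : ℕ∞) (W s))
    (hper : ∀ s, Function.Periodic (W s) 1) (hW₀ : ∀ s t, W s t ≠ 0)
    (hlt : ∀ s, ‖∫ t in (0 : ℝ)..1, W s t‖ < ∫ t in (0 : ℝ)..1, ‖W s t‖)
    (hc : W 0 = deriv c.toFun) (hc' : W 1 = deriv c'.toFun) : RegularlyHomotopic c c' := by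
  have hM (s : ℝ) : ∫ t in (0 : ℝ)..1, ‖W s t‖ ≠ 0 := ((norm_nonneg _).trans_lt (hlt s)).ne'
  refine regularlyHomotopic_of_balanced_velocity (V := fun s => balance (W s))
    (continuous_balance hW hM) (fun s => contDiff_balance (hsmooth s) (hW₀ s))
    (fun s => balance_periodic (hper s)) (fun s t => balance_ne_zero (hW₀ s t) (hlt s))
    (fun s => integral_balance (hsmooth s).continuous (hM s)) ?_ ?_
  · rw [hc, balance_eq_self c.integral_deriv_period]
  · rw [hc', balance_eq_self c'.integral_deriv_period]

theorem regularlyHomotopic_of_polar {c c' : PlanarCurve} {ρ θ : ℝ → ℝ → ℝ} (ω : ℤ)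
    (hρ : Continuous fun q : ℝ × ℝ => ρ q.1 q.2) (hθ : Continuous fun q : ℝ × ℝ => θ q.1 q.2)
    (hρs : ∀ s, ContDiff ℝ (⊤ : ℕ∞) (ρ s)) (hθs : ∀ s, ContDiff ℝ (⊤ : ℕ∞) (θ s))
    (hρT : ∀ s, Function.Periodic (ρ s) 1) (hθT : ∀ s t, θ s (t + 1) = θ s t + 2 * Real.pi * ω)
    (hρ₀ : ∀ s t, 0 < ρ s t) (hθ₁ : ∀ s, (θ s '' Icc 0 1).Nontrivial)
    (hc : ∀ t, deriv c.toFun t = ρ 0 t * Complex.exp (θ 0 t * Complex.I))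
    (hc' : ∀ t, deriv c'.toFun t = ρ 1 t * Complex.exp (θ 1 t * Complex.I)) :
    RegularlyHomotopic c c' := by
  let W : ℝ → ℝ → ℂ := fun s t => ρ s t * Complex.exp (θ s t * Complex.I)
  have hW : Continuous fun q : ℝ × ℝ => W q.1 q.2 := by fun_prop
  have hsmooth (s : ℝ) : ContDiff ℝ (⊤ : ℕ∞) (W s) :=
    (Complex.ofRealCLM.contDiff.comp (hρs s)).mul
      ((Complex.ofRealCLM.contDiff.comp (hθs s)).mul contDiff_const).cexp
  have hper (s : ℝ) : Function.Periodic (W s) 1 := fun t => by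
    have hexp := (Complex.exp_periodic.int_mul ω) (θ s t * Complex.I)
    simp only [W, hρT s t, hθT s t, ← hexp]
    push_cast
    ring_nf
  have hW₀ (s t : ℝ) : W s t ≠ 0 := by simp [W, (hρ₀ s t).ne']
  have hlift (s : ℝ) : IsAngleLift (W s) (θ s) :=
    isAngleLift_mul_exp (fun t => (hρ₀ s t).le) (hθs s).continuous
  exact regularlyHomotopic_of_velocity hW hsmooth hper hW₀
    (fun s => (hlift s).norm_integral_lt_integral_norm (hsmooth s).continuous (hW₀ s) (hθ₁ s))
    (funext hc).symm (funext hc').symm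

theorem HasWhitney.exists_smooth_isAngleLift {c : PlanarCurve} {ω : ℤ} (h : c.HasWhitney ω) :
    ∃ θ, IsAngleLift (deriv c.toFun) θ ∧ ContDiff ℝ (⊤ : ℕ∞) θ ∧
      (∀ t, θ (t + 1) = θ t + 2 * Real.pi * ω) ∧ (θ '' Icc 0 1).Nontrivial := by
  obtain ⟨θ, hθ, hω⟩ := h.exists_isAngleLift
  refine ⟨θ, hθ, hθ.contDiff c.contDiff_deriv c.immersion, fun t => ?_, ?_⟩
  · rw [hθ.add_period c.immersion (periodic_deriv c.periodic), hω]
  · exact hθ.nontrivial_image_of_integral_eq_zero one_pos c.contDiff_deriv.continuous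
      c.immersion c.integral_deriv_period

theorem contDiff_norm_deriv (c : PlanarCurve) :
    ContDiff ℝ (⊤ : ℕ∞) fun t => ‖deriv c.toFun t‖ :=
  c.contDiff_deriv.norm ℝ c.immersion

theorem HasWhitney.regularlyHomotopic {c c' : PlanarCurve} {ω : ℤ} (hω : c.HasWhitney ω)
    (hω' : c'.HasWhitney ω) : RegularlyHomotopic c c' := by
  obtain ⟨θ, hθ, hθs, hθT, hθ₁⟩ := hω.exists_smooth_isAngleLift
  obtain ⟨θ', hθ', hθs', hθT', hθ₁'⟩ := hω'.exists_smooth_isAngleLift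
  obtain ⟨χ, hχ, hχT, hbent⟩ := exists_periodic_bend hθs hθT hθT' hθ₁ hθ₁'
  let σ (s : ℝ) : ℝ := projIcc (0 : ℝ) 1 zero_le_one s
  let ρ := bentSegment (fun t => ‖deriv c.toFun t‖) (fun t => ‖deriv c'.toFun t‖) 0
  have hσ : Continuous fun q : ℝ × ℝ => (σ q.1, q.2) := by fun_prop
  have hρs := c.contDiff_norm_deriv
  have hρs' := c'.contDiff_norm_deriv
  have hρT (s : ℝ) : Function.Periodic (ρ s) 1 := fun t => by
    simp [ρ, bentSegment, periodic_deriv c.periodic t, periodic_deriv c'.periodic t]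
  have hρ₀ {s : ℝ} (hs : s ∈ Icc (0 : ℝ) 1) (t : ℝ) : 0 < ρ s t :=
    bentSegment_pos (f := fun t => ‖deriv c.toFun t‖) (g := fun t => ‖deriv c'.toFun t‖)
      (norm_pos_iff.2 (c.immersion t)) (norm_pos_iff.2 (c'.immersion t)) le_rfl hs
  refine regularlyHomotopic_of_polar (ρ := fun s => ρ (σ s))
    (θ := fun s => bentSegment θ θ' χ (σ s)) ω
    ((continuous_bentSegment hρs.continuous hρs'.continuous continuous_const).comp hσ)
    ((continuous_bentSegment hθs.continuous hθs'.continuous hχ.continuous).comp hσ)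
    (fun s => contDiff_bentSegment hρs hρs' contDiff_const _)
    (fun s => contDiff_bentSegment hθs hθs' hχ _) (fun s => hρT _)
    (fun s => bentSegment_add hθT hθT' hχT _)
    (fun s => hρ₀ (projIcc _ _ _ s).2)
    (fun s => hbent _ (projIcc _ _ _ s).2) (fun t => ?_) fun t => ?_
  · simpa [σ, ρ, bentSegment_zero] using hθ.eq_norm_mul_exp t
  · simpa [σ, ρ, bentSegment_one] using hθ'.eq_norm_mul_exp t

end PlanarCurve

theorem statement7_general (c c' : PlanarCurve) (ω ω' : ℤ) (hω : c.HasWhitney ω)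
    (hω' : c'.HasWhitney ω') : PlanarCurve.RegularlyHomotopic c c' ↔ ω = ω' := by
  refine ⟨hω.eq_of_regularlyHomotopic hω', ?_⟩
  rintro rfl
  exact hω.regularlyHomotopic hω'

/-- Whitney's theorem, planar case. Two stable planar curves are
regularly homotopic if and only if they have the same Whitney winding number. -/
theorem statement7 (c c' : PlanarCurve) (hc : c.Stable) (hc' : c'.Stable)
    (ω ω' : ℤ) (hω : c.HasWhitney ω) (hω' : c'.HasWhitney ω') :
    PlanarCurve.RegularlyHomotopic c c' ↔ ω = ω' :=
  statement7_general c c' ω ω' hω hω'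

end CurvePaper
end
end

section
/- Whitney's Theorem for spherical curves: two stable spherical curves are regularly homotopic (through immersions) if and only if they have the same Whitney number in {0,1}. -/
open Set
open scoped ENNReal

noncomputable section

namespace CurvePaper


/-!
In the plane, a closed curve with rotation number `m` can be deformed to unit speed, hence is
determined up to regular homotopy by its angle function; the angle functions form a convex set if
`m ≠ 0`, and can be joined through cosines if `m = 0`. Subtracting the mean from the velocity keeps
the curves closed, and keeps them immersed because the mean of a nonconstant unit vector field has
norm less than one.

On the sphere, `z ↦ z⁻¹` is a rotation, so it does not change the regular homotopy class, whereas it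
lowers the rotation number of a curve winding once around the origin by two. Hence only the parity
of the rotation number matters. The parity is an invariant because the frame given by position and
unit tangent lifts to a path of quaternions, which is multiplied by a factor of sign `(-1) ^ m`
over one period.
-/

/-! ### Regular homotopy -/

section RegularHomotopy

open scoped ContDiff

variable {E F : Type*} [NormedAddCommGroup E] [NormedSpace ℝ E]
  [NormedAddCommGroup F] [NormedSpace ℝ F] {S : Set E} {T : Set F} {f g h : ℝ → E}

/-- `f` is a smooth closed immersed curve in `S`, parametrised by `ℝ` with period one. -/
structure IsClosedImmersion (S : Set E) (f : ℝ → E) : Prop where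
  mem : ∀ t, f t ∈ S
  periodic : Function.Periodic f 1
  contDiff : ContDiff ℝ ∞ f
  deriv_ne_zero : ∀ t, deriv f t ≠ 0

/-- Regular homotopy of closed curves in `S`: a path of smooth closed immersions which is
continuous together with its velocity. The parameter runs over all of `ℝ`, as in
`SphericalCurve.IsRegHomotopy`; `RegHomotopic.of_unitInterval` shows that `[0, 1]` suffices. -/
def RegHomotopic (S : Set E) (f g : ℝ → E) : Prop :=
  ∃ H : ℝ → ℝ → E, (Continuous fun q : ℝ × ℝ => H q.1 q.2) ∧
    (Continuous fun q : ℝ × ℝ => deriv (H q.1) q.2) ∧ (∀ s, IsClosedImmersion S (H s)) ∧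
    H 0 = f ∧ H 1 = g

theorem RegHomotopic.of_unitInterval (H : ℝ → ℝ → E)
    (hH : Continuous fun q : ℝ × ℝ => H q.1 q.2)
    (hH' : Continuous fun q : ℝ × ℝ => deriv (H q.1) q.2)
    (himm : ∀ s ∈ Icc (0 : ℝ) 1, IsClosedImmersion S (H s)) : RegHomotopic S (H 0) (H 1) := by
  have hclamp : Continuous fun q : ℝ × ℝ => (max 0 (min 1 q.1), q.2) := by fun_prop
  exact ⟨fun s => H (max 0 (min 1 s)), hH.comp hclamp, hH'.comp hclamp,
    fun s => himm _ ⟨by simp, by simp⟩, by simp, by simp⟩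

theorem RegHomotopic.symm (hfg : RegHomotopic S f g) : RegHomotopic S g f := by
  obtain ⟨H, hH, hH', himm, rfl, rfl⟩ := hfg
  have hflip : Continuous fun q : ℝ × ℝ => (1 - q.1, q.2) := by fun_prop
  exact ⟨fun s => H (1 - s), hH.comp hflip, hH'.comp hflip, fun s => himm _, by simp, by simp⟩

theorem RegHomotopic.trans (hfg : RegHomotopic S f g) (hgh : RegHomotopic S g h) :
    RegHomotopic S f h := by
  obtain ⟨H, hH, hH', hHimm, rfl, rfl⟩ := hfg
  obtain ⟨K, hK, hK', hKimm, hHK, rfl⟩ := hgh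
  have hfst : Continuous fun q : ℝ × ℝ => (2 * q.1, q.2) := by fun_prop
  have hsnd : Continuous fun q : ℝ × ℝ => (2 * q.1 - 1, q.2) := by fun_prop
  have hglue : ∀ s : ℝ, s = 1 / 2 → H (2 * s) = K (2 * s - 1) := by
    rintro s rfl
    norm_num [hHK]
  let L : ℝ → ℝ → E := fun s => if s ≤ 1 / 2 then H (2 * s) else K (2 * s - 1)
  have hL : Continuous fun q : ℝ × ℝ => L q.1 q.2 := by
    simp only [L, ite_apply]
    exact (hH.comp hfst).if_le (hK.comp hsnd) continuous_fst continuous_const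
      fun q hq => by simp [hglue _ hq]
  have hL' : Continuous fun q : ℝ × ℝ => deriv (L q.1) q.2 := by
    simp only [L, apply_ite deriv, ite_apply]
    exact (hH'.comp hfst).if_le (hK'.comp hsnd) continuous_fst continuous_const
      fun q hq => by simp [hglue _ hq]
  refine ⟨L, hL, hL', fun s => ?_, by simp [L], by norm_num [L]⟩
  simp only [L]
  split_ifs
  exacts [hHimm _, hKimm _]

theorem IsClosedImmersion.hasDerivAt (hf : IsClosedImmersion S f) (t : ℝ) :
    HasDerivAt f (deriv f t) t :=
  (hf.contDiff.differentiable (by simp) t).hasDerivAt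

theorem IsClosedImmersion.periodic_deriv (hf : IsClosedImmersion S f) :
    Function.Periodic (deriv f) 1 := fun t => by
  rw [← deriv_comp_add_const, hf.periodic.funext]

theorem IsClosedImmersion.comp {Φ : E → F} (hf : IsClosedImmersion S f) (hΦ : ContDiff ℝ ∞ Φ)
    (hinj : ∀ x ∈ S, Function.Injective (fderiv ℝ Φ x)) (hmaps : MapsTo Φ S T) :
    IsClosedImmersion T (Φ ∘ f) where
  mem t := hmaps (hf.mem t)
  periodic := hf.periodic.comp Φ
  contDiff := hΦ.comp hf.contDiff
  deriv_ne_zero t := by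
    rw [fderiv_comp_deriv t (hΦ.differentiable (by simp) _) (hf.hasDerivAt t).differentiableAt]
    exact (map_ne_zero_iff _ (hinj _ (hf.mem t))).2 (hf.deriv_ne_zero t)

theorem RegHomotopic.comp {Φ : E → F} (hfg : RegHomotopic S f g) (hΦ : ContDiff ℝ ∞ Φ)
    (hinj : ∀ x ∈ S, Function.Injective (fderiv ℝ Φ x)) (hmaps : MapsTo Φ S T) :
    RegHomotopic T (Φ ∘ f) (Φ ∘ g) := by
  obtain ⟨H, hH, hH', himm, rfl, rfl⟩ := hfg
  refine ⟨fun s => Φ ∘ H s, hΦ.continuous.comp hH, ?_, fun s => (himm s).comp hΦ hinj hmaps,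
    rfl, rfl⟩
  have hderiv : (fun q : ℝ × ℝ => deriv (Φ ∘ H q.1) q.2) =
      fun q => fderiv ℝ Φ (H q.1 q.2) (deriv (H q.1) q.2) := funext fun q =>
    fderiv_comp_deriv _ (hΦ.differentiable (by simp) _)
      ((himm q.1).hasDerivAt q.2).differentiableAt
  rw [hderiv]
  exact ((hΦ.continuous_fderiv (by simp)).comp hH).clm_apply hH'

theorem IsClosedImmersion.regHomotopic_clm (hf : IsClosedImmersion S f) (A : ℝ → E →L[ℝ] E)
    (hA : Continuous fun p : ℝ × E => A p.1 p.2) (hinj : ∀ s, Function.Injective (A s))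
    (hmaps : ∀ s, MapsTo (A s) S S) : RegHomotopic S (A 0 ∘ f) (A 1 ∘ f) := by
  have hderiv (s t : ℝ) : deriv (A s ∘ f) t = A s (deriv f t) :=
    ((A s).hasFDerivAt.comp_hasDerivAt t (hf.hasDerivAt t)).deriv
  refine ⟨fun s => A s ∘ f, ?_, ?_, fun s => hf.comp (A s).contDiff ?_ (hmaps s), rfl, rfl⟩
  · exact hA.comp (continuous_fst.prodMk (hf.contDiff.continuous.comp continuous_snd))
  · simp only [hderiv]
    exact hA.comp (continuous_fst.prodMk
      ((hf.contDiff.continuous_deriv (by simp)).comp continuous_snd))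
  · exact fun x _ => by simpa using hinj s

theorem SphericalCurve.isClosedImmersion (c : SphericalCurve) :
    IsClosedImmersion (Metric.sphere 0 1) c.toFun where
  mem t := mem_sphere_zero_iff_norm.2 (c.norm_one t)
  periodic := c.periodic
  contDiff := c.smooth
  deriv_ne_zero := c.immersion

theorem SphericalCurve.regularlyHomotopic_iff {c c' : SphericalCurve} :
    SphericalCurve.RegularlyHomotopic c c' ↔
      RegHomotopic (Metric.sphere 0 1) c.toFun c'.toFun := by
  constructor
  · rintro ⟨H, hH, hH', hnorm, hper, hsmooth, himm, h0, h1⟩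
    exact ⟨H, hH, hH', fun s => ⟨fun t => mem_sphere_zero_iff_norm.2 (hnorm s t), hper s,
      hsmooth s, himm s⟩, h0, h1⟩
  · rintro ⟨H, hH, hH', himm, h0, h1⟩
    exact ⟨H, hH, hH', fun s t => mem_sphere_zero_iff_norm.1 ((himm s).mem t),
      fun s => (himm s).periodic, fun s => (himm s).contDiff, fun s => (himm s).deriv_ne_zero,
      h0, h1⟩

end RegularHomotopy

/-! ### Curves in the plane -/

section ClosedPrimitive

open scoped ContDiff
open MeasureTheory

variable {E : Type*} [NormedAddCommGroup E] [NormedSpace ℝ E]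

theorem norm_integral_lt_one_of_norm_eq_one [StrictConvexSpace ℝ E] [CompleteSpace E] {f : ℝ → E}
    (hf : Continuous f) (hnorm : ∀ t, ‖f t‖ = 1) (hper : Function.Periodic f 1)
    (hne : ∃ x y, f x ≠ f y) : ‖∫ t in (0 : ℝ)..1, f t‖ < 1 := by
  rcases ae_eq_const_or_norm_setIntegral_lt_of_norm_le_const (μ := volume) (t := Ioc (0 : ℝ) 1)
    (f := f) (C := 1) (by simp) (by simp [hnorm]) with hconst | hlt
  · rw [Filter.EventuallyEq, ae_restrict_congr_set Ioc_ae_eq_Icc] at hconst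
    have hEqOn := Measure.eqOn_Icc_of_ae_eq volume zero_ne_one hconst hf.continuousOn
      continuousOn_const
    have hall : ∀ t, f t = ⨍ x in Ioc (0 : ℝ) 1, f x := fun t => by
      obtain ⟨y, hy, hty⟩ := hper.exists_mem_Ico₀ one_pos t
      rw [hty, hEqOn (Ico_subset_Icc_self hy), Function.const_apply]
    obtain ⟨x, y, hxy⟩ := hne
    exact absurd ((hall x).trans (hall y).symm) hxy
  · rw [intervalIntegral.integral_of_le zero_le_one]
    simpa using hlt

/-- The primitive of `g` minus its mean over a period, starting at `a`: the simplest closed curve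
with velocity `g` up to a constant. -/
def closedPrimitive (a : E) (g : ℝ → E) (t : ℝ) : E :=
  a + (∫ x in (0 : ℝ)..t, g x) - t • ∫ x in (0 : ℝ)..1, g x

variable {a : E} {g : ℝ → E}

theorem periodic_closedPrimitive (hg : Continuous g) (hper : Function.Periodic g 1) :
    Function.Periodic (closedPrimitive a g) 1 := by
  intro t
  have hadd := intervalIntegral.integral_add_adjacent_intervals
    (hg.intervalIntegrable (μ := volume) 0 t) (hg.intervalIntegrable t (t + 1))
  simp only [closedPrimitive, ← hadd, hper.intervalIntegral_add_eq t 0, zero_add, add_smul,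
    one_smul]
  abel

variable [CompleteSpace E]

theorem hasDerivAt_closedPrimitive (hg : Continuous g) (t : ℝ) :
    HasDerivAt (closedPrimitive a g) (g t - ∫ x in (0 : ℝ)..1, g x) t := by
  have hlin := (hasDerivAt_id t).smul_const (∫ x in (0 : ℝ)..1, g x)
  have hint := (hg.integral_hasStrictDerivAt 0 t).hasDerivAt
  simpa [closedPrimitive] using! (hint.const_add a).sub hlin

theorem deriv_closedPrimitive (hg : Continuous g) :
    deriv (closedPrimitive a g) = fun t => g t - ∫ x in (0 : ℝ)..1, g x :=
  funext fun t => (hasDerivAt_closedPrimitive hg t).deriv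

theorem closedPrimitive_of_hasDerivAt {γ : ℝ → E} (hg : Continuous g)
    (hγ : ∀ t, HasDerivAt γ (g t) t) (hper : Function.Periodic γ 1) :
    closedPrimitive (γ 0) g = γ := by
  have hint (t : ℝ) : ∫ x in (0 : ℝ)..t, g x = γ t - γ 0 :=
    intervalIntegral.integral_eq_sub_of_hasDerivAt (fun x _ => hγ x) (hg.intervalIntegrable _ _)
  funext t
  simp [closedPrimitive, hint, hper.eq]

theorem contDiff_closedPrimitive (hg : ContDiff ℝ ∞ g) : ContDiff ℝ ∞ (closedPrimitive a g) := by
  rw [contDiff_infty_iff_deriv, deriv_closedPrimitive hg.continuous]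
  exact ⟨fun t => (hasDerivAt_closedPrimitive hg.continuous t).differentiableAt,
    hg.sub contDiff_const⟩

theorem regHomotopic_closedPrimitive {a : ℝ → E} {g : ℝ → ℝ → E} (ha : Continuous a)
    (hg : Continuous fun q : ℝ × ℝ => g q.1 q.2)
    (hper : ∀ s ∈ Icc (0 : ℝ) 1, Function.Periodic (g s) 1)
    (hsmooth : ∀ s ∈ Icc (0 : ℝ) 1, ContDiff ℝ ∞ (g s))
    (hmean : ∀ s ∈ Icc (0 : ℝ) 1, ∀ t : ℝ, g s t ≠ ∫ x in (0 : ℝ)..1, g s x) :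
    RegHomotopic univ (closedPrimitive (a 0) (g 0)) (closedPrimitive (a 1) (g 1)) := by
  have hgs (s : ℝ) : Continuous (g s) := hg.comp (Continuous.prodMk_right s)
  have hmeanc : Continuous fun q : ℝ × ℝ => ∫ x in (0 : ℝ)..1, g q.1 x :=
    (intervalIntegral.continuous_parametric_intervalIntegral_of_continuous hg
      continuous_const).comp continuous_fst
  refine .of_unitInterval (fun s => closedPrimitive (a s) (g s)) ?_ ?_ fun s hs =>
    ⟨fun _ => mem_univ _, periodic_closedPrimitive (hgs s) (hper s hs),
      contDiff_closedPrimitive (hsmooth s hs), fun t => ?_⟩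
  · exact ((ha.comp continuous_fst).add
      (intervalIntegral.continuous_parametric_primitive_of_continuous hg)).sub
      (continuous_snd.smul hmeanc)
  · simp only [deriv_closedPrimitive (hgs _)]
    exact hg.sub hmeanc
  · rw [deriv_closedPrimitive (hgs s)]
    exact sub_ne_zero.2 (hmean s hs t)

end ClosedPrimitive

section WhitneyGraustein

open scoped ContDiff Real
open Complex (I)

/-- `γ` is a closed plane curve with rotation number `m`: `φ` is a smooth logarithm of its
velocity, so that the imaginary part of `φ` is the angle of the tangent. -/
def HasRotationNumber (γ : ℝ → ℂ) (m : ℤ) : Prop :=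
  Function.Periodic γ 1 ∧ ∃ φ : ℝ → ℂ, ContDiff ℝ ∞ φ ∧
    (∀ t, HasDerivAt γ (Complex.exp (φ t)) t) ∧ ∀ t, φ (t + 1) = φ t + 2 * π * m * I

theorem HasRotationNumber.isClosedImmersion {γ : ℝ → ℂ} {m : ℤ} (hγ : HasRotationNumber γ m) :
    IsClosedImmersion univ γ := by
  obtain ⟨hper, φ, hφ, hderiv, -⟩ := hγ
  have hderiv' : deriv γ = fun t => Complex.exp (φ t) := funext fun t => (hderiv t).deriv
  refine ⟨fun _ => mem_univ _, hper, contDiff_infty_iff_deriv.2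
    ⟨fun t => (hderiv t).differentiableAt, ?_⟩, fun t => ?_⟩
  · rw [hderiv']
    exact hφ.cexp
  · rw [hderiv']
    exact Complex.exp_ne_zero _

/-- The unit vector field along `ℝ` with angle `θ`. -/
def unitVelocity (θ : ℝ → ℝ) (t : ℝ) : ℂ := Complex.exp (θ t * I)

theorem norm_unitVelocity (θ : ℝ → ℝ) (t : ℝ) : ‖unitVelocity θ t‖ = 1 :=
  Complex.norm_exp_ofReal_mul_I _

/-- The angle functions that occur for closed curves of rotation number `m`. They are not constant,
since a curve whose tangent has constant direction does not close up. -/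
structure IsAngleFunction (m : ℤ) (θ : ℝ → ℝ) : Prop where
  contDiff : ContDiff ℝ ∞ θ
  add_one : ∀ t, θ (t + 1) = θ t + 2 * π * m
  nonconstant : ∃ x y, θ x ≠ θ y

namespace IsAngleFunction

variable {m : ℤ} {θ θ' : ℝ → ℝ}

theorem contDiff_unitVelocity (hθ : IsAngleFunction m θ) : ContDiff ℝ ∞ (unitVelocity θ) :=
  ((Complex.ofRealCLM.contDiff.comp hθ.contDiff).mul contDiff_const).cexp

theorem periodic_unitVelocity (hθ : IsAngleFunction m θ) :
    Function.Periodic (unitVelocity θ) 1 := fun t =>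
  Complex.exp_eq_exp_iff_exists_int.2 ⟨m, by rw [hθ.add_one]; push_cast; ring⟩

theorem norm_integral_unitVelocity_lt_one (hθ : IsAngleFunction m θ) :
    ‖∫ t in (0 : ℝ)..1, unitVelocity θ t‖ < 1 := by
  refine norm_integral_lt_one_of_norm_eq_one hθ.contDiff_unitVelocity.continuous
    (norm_unitVelocity θ) hθ.periodic_unitVelocity ?_
  by_contra! hconst
  have hcont : Continuous fun t => (θ t : ℂ) * I := by
    have := hθ.contDiff.continuous
    fun_prop
  obtain ⟨x, y, hxy⟩ := hθ.nonconstant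
  have hθI : (θ x : ℂ) * I = θ y * I :=
    Complex.isCoveringMap_exp.const_of_comp hcont (fun a b => Subtype.ext (hconst a b)) x y
  exact hxy (by simpa using hθI)

theorem regHomotopic_of_homotopy {θ : ℝ → ℝ → ℝ} (hcont : Continuous fun q : ℝ × ℝ => θ q.1 q.2)
    (hθ : ∀ s ∈ Icc (0 : ℝ) 1, IsAngleFunction m (θ s)) :
    RegHomotopic univ (closedPrimitive 0 (unitVelocity (θ 0)))
      (closedPrimitive 0 (unitVelocity (θ 1))) := by
  refine regHomotopic_closedPrimitive (a := fun _ => 0) (g := fun s => unitVelocity (θ s))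
    continuous_const ?_ (fun s hs => (hθ s hs).periodic_unitVelocity)
    (fun s hs => (hθ s hs).contDiff_unitVelocity) fun s hs t heq => ?_
  · unfold unitVelocity
    fun_prop
  · have hlt := (hθ s hs).norm_integral_unitVelocity_lt_one
    rw [← heq, norm_unitVelocity] at hlt
    exact lt_irrefl _ hlt

theorem lineMap (hm : m ≠ 0) (hθ : IsAngleFunction m θ) (hθ' : IsAngleFunction m θ') (s : ℝ) :
    IsAngleFunction m fun t => (1 - s) * θ t + s * θ' t where
  contDiff := (contDiff_const.mul hθ.contDiff).add (contDiff_const.mul hθ'.contDiff)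
  add_one t := by simp only [hθ.add_one, hθ'.add_one]; ring
  nonconstant := by
    refine ⟨0 + 1, 0, fun heq => ?_⟩
    rw [hθ.add_one, hθ'.add_one] at heq
    have hzero : 2 * π * (m : ℝ) = 0 := by linarith
    simp [hm, Real.pi_ne_zero] at hzero

theorem cos (y : ℝ) : IsAngleFunction 0 fun t => Real.cos (2 * π * (t - y)) where
  contDiff := by fun_prop
  add_one t := by
    rw [show 2 * π * (t + 1 - y) = 2 * π * (t - y) + 2 * π by ring, Real.cos_add_two_pi]
    simp
  nonconstant := ⟨y, y + 1 / 2, by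
    simp only [show 2 * π * (y + 1 / 2 - y) = π by ring, sub_self, mul_zero, Real.cos_zero,
      Real.cos_pi]
    norm_num⟩

theorem exists_lt (hθ : IsAngleFunction m θ) : ∃ x y, θ x < θ y := by
  obtain ⟨x, y, hxy⟩ := hθ.nonconstant
  rcases hxy.lt_or_gt with hlt | hlt
  exacts [⟨x, y, hlt⟩, ⟨y, x, hlt⟩]

theorem cos_lt_one_of_ne (hθ : IsAngleFunction 0 θ) {x y : ℝ} (hxy : θ x ≠ θ y) :
    Real.cos (2 * π * (x - y)) < 1 := by
  refine (Real.cos_le_one _).lt_of_ne fun hcos => hxy ?_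
  obtain ⟨n, hn⟩ := (Real.cos_eq_one_iff _).1 hcos
  have hx : x = y + n * 1 := by
    have : (2 * π) * (n : ℝ) = (2 * π) * (x - y) := by linarith
    linarith [mul_left_cancel₀ (by positivity) this]
  have hper : Function.Periodic θ 1 := fun t => by simp [hθ.add_one]
  rw [hx, hper.int_mul n y]

/-- The cosine is centred at a point `y` with `θ x < θ y`: then all convex combinations still
separate `x` from `y`. -/
theorem exists_lineMap_cos (hθ : IsAngleFunction 0 θ) : ∃ y, ∀ s ∈ Icc (0 : ℝ) 1,
    IsAngleFunction 0 fun t => (1 - s) * θ t + s * Real.cos (2 * π * (t - y)) := by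
  obtain ⟨x, y, hxy⟩ := hθ.exists_lt
  refine ⟨y, fun s hs => ⟨?_, fun t => ?_, x, y, ne_of_lt ?_⟩⟩
  · exact (contDiff_const.mul hθ.contDiff).add (contDiff_const.mul (cos y).contDiff)
  · simp only [hθ.add_one, (cos y).add_one]
    simp
  · simp only [sub_self, mul_zero, Real.cos_zero]
    have hcos := hθ.cos_lt_one_of_ne hxy.ne
    rcases hs.1.eq_or_lt with rfl | hpos
    · simpa using hxy
    · have := mul_le_mul_of_nonneg_left hxy.le (sub_nonneg.2 hs.2)
      nlinarith

theorem regHomotopic_cos (hθ : IsAngleFunction 0 θ) :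
    RegHomotopic univ (closedPrimitive 0 (unitVelocity θ))
      (closedPrimitive 0 (unitVelocity fun t => Real.cos (2 * π * t))) := by
  obtain ⟨y, hy⟩ := hθ.exists_lineMap_cos
  have hcont := hθ.contDiff.continuous
  have hline := regHomotopic_of_homotopy (m := 0)
    (θ := fun s t => (1 - s) * θ t + s * Real.cos (2 * π * (t - y))) (by fun_prop) hy
  have hshift := regHomotopic_of_homotopy (m := 0)
    (θ := fun s t => Real.cos (2 * π * (t - (1 - s) * y))) (by fun_prop) fun s _ => cos _
  simp only [sub_zero, one_mul, zero_mul, add_zero, sub_self, zero_add] at hline hshift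
  exact hline.trans hshift

theorem regHomotopic (hθ : IsAngleFunction m θ) (hθ' : IsAngleFunction m θ') :
    RegHomotopic univ (closedPrimitive 0 (unitVelocity θ))
      (closedPrimitive 0 (unitVelocity θ')) := by
  rcases eq_or_ne m 0 with rfl | hm
  · exact hθ.regHomotopic_cos.trans hθ'.regHomotopic_cos.symm
  · have hcont := hθ.contDiff.continuous
    have hcont' := hθ'.contDiff.continuous
    simpa using regHomotopic_of_homotopy (m := m) (θ := fun s t => (1 - s) * θ t + s * θ' t)
      (by fun_prop) fun s _ => hθ.lineMap hm hθ' s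

end IsAngleFunction

theorem exp_eq_smul_unitVelocity (φ : ℝ → ℂ) (t : ℝ) :
    Complex.exp (φ t) = Real.exp (φ t).re • unitVelocity (fun t => (φ t).im) t := by
  rw [unitVelocity, Complex.real_smul, Complex.ofReal_exp, ← Complex.exp_add, Complex.re_add_im]

theorem isAngleFunction_im {φ : ℝ → ℂ} {m : ℤ} (hφ : ContDiff ℝ ∞ φ)
    (hadd : ∀ t, φ (t + 1) = φ t + 2 * π * m * I)
    (hmean : ∫ t in (0 : ℝ)..1, Complex.exp (φ t) = 0) :
    IsAngleFunction m fun t => (φ t).im where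
  contDiff := Complex.imCLM.contDiff.comp hφ
  add_one t := by simp [hadd]
  nonconstant := by
    by_contra! hconst
    have hspeed : Continuous fun t => Real.exp (φ t).re := by
      have := hφ.continuous
      fun_prop
    have hpos : 0 < ∫ t in (0 : ℝ)..1, Real.exp (φ t).re :=
      intervalIntegral.intervalIntegral_pos_of_pos (hspeed.intervalIntegrable _ _)
        (fun _ => Real.exp_pos _) zero_lt_one
    have hdir (t : ℝ) :
        unitVelocity (fun t => (φ t).im) t = unitVelocity (fun t => (φ t).im) 0 := by
      simp only [unitVelocity, hconst t 0]
    simp_rw [exp_eq_smul_unitVelocity, hdir, intervalIntegral.integral_smul_const] at hmean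
    exact (smul_ne_zero hpos.ne' (Complex.exp_ne_zero _)) hmean

/-- The velocity `((1 - s) e^ρ + s) e^{iθ}` on the left has mean `s M`, where `M` is the mean of
`e^{iθ}`, and `‖M‖ < 1`. -/
theorem interpolate_unitVelocity_ne_integral {φ : ℝ → ℂ} {m : ℤ} (hφ : ContDiff ℝ ∞ φ)
    (hθ : IsAngleFunction m fun t => (φ t).im)
    (hmean : ∫ t in (0 : ℝ)..1, Complex.exp (φ t) = 0) {s : ℝ} (hs : s ∈ Icc (0 : ℝ) 1) (t : ℝ) :
    (1 - s) • Complex.exp (φ t) + s • unitVelocity (fun t => (φ t).im) t ≠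
      ∫ x in (0 : ℝ)..1,
        ((1 - s) • Complex.exp (φ x) + s • unitVelocity (fun t => (φ t).im) x) := by
  have hexp : Continuous fun x => (1 - s) • Complex.exp (φ x) :=
    hφ.cexp.continuous.fun_const_smul _
  have hunit : Continuous fun x => s • unitVelocity (fun t => (φ t).im) x :=
    hθ.contDiff_unitVelocity.continuous.fun_const_smul _
  rw [intervalIntegral.integral_add (hexp.intervalIntegrable _ _) (hunit.intervalIntegrable _ _),
    intervalIntegral.integral_smul, intervalIntegral.integral_smul, hmean, smul_zero, zero_add,
    exp_eq_smul_unitVelocity, smul_smul, ← add_smul]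
  intro heq
  have hspeed := Real.exp_pos (φ t).re
  have hnonneg : 0 ≤ (1 - s) * Real.exp (φ t).re := mul_nonneg (sub_nonneg.2 hs.2) hspeed.le
  have hnorm := congrArg norm heq
  rw [norm_smul, norm_smul, norm_unitVelocity, Real.norm_of_nonneg hs.1,
    Real.norm_of_nonneg (add_nonneg hnonneg hs.1), mul_one] at hnorm
  rcases hs.1.eq_or_lt with rfl | hpos
  · simp at hnorm
  · nlinarith [hθ.norm_integral_unitVelocity_lt_one]

variable {γ γ' : ℝ → ℂ} {m : ℤ}

theorem HasRotationNumber.exists_regHomotopic_unitVelocity (hγ : HasRotationNumber γ m) :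
    ∃ θ, IsAngleFunction m θ ∧ RegHomotopic univ γ (closedPrimitive 0 (unitVelocity θ)) := by
  obtain ⟨hper, φ, hφ, hderiv, hadd⟩ := hγ
  have hcont : Continuous fun t => Complex.exp (φ t) := hφ.cexp.continuous
  have hmean : ∫ t in (0 : ℝ)..1, Complex.exp (φ t) = 0 := by
    rw [intervalIntegral.integral_eq_sub_of_hasDerivAt (fun t _ => hderiv t)
      (hcont.intervalIntegrable _ _), hper.eq, sub_self]
  have hθ := isAngleFunction_im hφ hadd hmean
  refine ⟨_, hθ, ?_⟩
  set u := unitVelocity fun t => (φ t).im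
  have hu : ContDiff ℝ ∞ u := hθ.contDiff_unitVelocity
  have hu_cont : Continuous u := hu.continuous
  have hexp_per (t : ℝ) : Complex.exp (φ (t + 1)) = Complex.exp (φ t) := by
    rw [hadd]
    exact Complex.exp_eq_exp_iff_exists_int.2 ⟨m, by ring⟩
  have hhom := regHomotopic_closedPrimitive (a := fun s => (1 - s) • γ 0)
    (g := fun s t => (1 - s) • Complex.exp (φ t) + s • u t) (by fun_prop) (by fun_prop)
    (fun s _ t => by simp only [hexp_per, hθ.periodic_unitVelocity t, u])
    (fun s _ => (hφ.cexp.const_smul (1 - s)).add (hu.const_smul s))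
    (fun s hs => interpolate_unitVelocity_ne_integral hφ hθ hmean hs)
  simpa [closedPrimitive_of_hasDerivAt hcont hderiv hper] using hhom

theorem HasRotationNumber.regHomotopic (hγ : HasRotationNumber γ m)
    (hγ' : HasRotationNumber γ' m) : RegHomotopic univ γ γ' := by
  obtain ⟨θ, hθ, hγθ⟩ := hγ.exists_regHomotopic_unitVelocity
  obtain ⟨θ', hθ', hγθ'⟩ := hγ'.exists_regHomotopic_unitVelocity
  exact hγθ.trans ((hθ.regHomotopic hθ').trans hγθ'.symm)

end WhitneyGraustein

/-! ### Frames in the quaternions -/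

section QuaternionicFrame

/-- The relations satisfied by two of the imaginary units of the quaternions; in `ℍ[ℝ]` such pairs
are the oriented orthonormal frames of imaginary quaternions, the third vector being `p * u`. -/
structure IsQuatFrame {A : Type*} [Ring A] (p u : A) : Prop where
  left_sq : p * p = -1
  right_sq : u * u = -1
  anticomm : p * u = -(u * p)

/-- The average (up to a scalar) of `x` under the action `x ↦ g' * x * g⁻¹` of the quaternion group
generated by the frames `(p, u)` and `(p', u')`. When invertible, it conjugates `(p, u)` to
`(p', u')`. -/
def intertwiner {A : Type*} [Ring A] (p u p' u' x : A) : A :=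
  x - p' * x * p - u' * x * u - p' * u' * x * (p * u)

namespace IsQuatFrame

section Ring

variable {A : Type*} [Ring A] {p u p' u' : A}

theorem left_mul_left_mul (h : IsQuatFrame p u) (x : A) : p * (p * x) = -x := by
  rw [← mul_assoc, h.left_sq, neg_one_mul]

theorem right_mul_right_mul (h : IsQuatFrame p u) (x : A) : u * (u * x) = -x := by
  rw [← mul_assoc, h.right_sq, neg_one_mul]

theorem left_mul_right_mul (h : IsQuatFrame p u) (x : A) : p * (u * x) = -(u * (p * x)) := by
  rw [← mul_assoc, h.anticomm, neg_mul, mul_assoc]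

theorem intertwiner_mul_left (h : IsQuatFrame p u) (h' : IsQuatFrame p' u') (x : A) :
    intertwiner p u p' u' x * p = p' * intertwiner p u p' u' x := by
  simp only [intertwiner, sub_mul, mul_sub, mul_assoc, h.left_sq, h.anticomm,
    h'.left_mul_left_mul, h'.left_mul_right_mul, mul_neg, neg_mul, neg_neg, mul_one]
  abel

theorem intertwiner_mul_right (h : IsQuatFrame p u) (h' : IsQuatFrame p' u') (x : A) :
    intertwiner p u p' u' x * u = u' * intertwiner p u p' u' x := by
  simp only [intertwiner, sub_mul, mul_sub, mul_assoc, h.right_sq, h.anticomm,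
    h.right_mul_right_mul, h'.right_mul_right_mul, h'.left_mul_right_mul, mul_neg, neg_mul,
    neg_neg, mul_one]
  abel

theorem intertwiner_self_one (h : IsQuatFrame p u) : intertwiner p u p u 1 = 4 := by
  simp only [intertwiner, mul_assoc, h.left_sq, h.right_sq, h.anticomm, h.left_mul_right_mul,
    mul_neg, neg_mul, neg_neg, mul_one]
  norm_num

theorem intertwiner_sum (h : IsQuatFrame p u) :
    intertwiner p u p' u' 1 - intertwiner p u p' u' p * p - intertwiner p u p' u' u * u -
      intertwiner p u p' u' (p * u) * (p * u) = 4 := by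
  simp only [intertwiner, sub_mul, mul_assoc, h.left_sq, h.right_sq, h.anticomm,
    h.left_mul_right_mul, h.right_mul_right_mul, mul_neg, neg_mul, neg_neg, mul_one]
  rw [show (4 : A) = 1 + 1 + 1 + 1 by norm_num]
  abel

end Ring

variable {D : Type*} [DivisionRing D] [CharZero D] {p u p' u' : D}

theorem exists_ne_zero_intertwines (h : IsQuatFrame p u) (h' : IsQuatFrame p' u') :
    ∃ q : D, q ≠ 0 ∧ q * p = p' * q ∧ q * u = u' * q := by
  suffices ∃ x, intertwiner p u p' u' x ≠ 0 by
    obtain ⟨x, hx⟩ := this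
    exact ⟨_, hx, h.intertwiner_mul_left h' x, h.intertwiner_mul_right h' x⟩
  by_contra! hzero
  simpa [hzero] using h.intertwiner_sum (p' := p') (u' := u')

end IsQuatFrame

end QuaternionicFrame

/-! ### Rotations and stereographic projection -/

section Rotation

open scoped Quaternion RealInnerProductSpace

local notation "ℝ³" => EuclideanSpace ℝ (Fin 3)

/-- The first imaginary unit of the quaternions. -/
@[simps]
def quatI : ℍ[ℝ] := ⟨0, 1, 0, 0⟩

/-- The third imaginary unit of the quaternions. -/
@[simps]
def quatK : ℍ[ℝ] := ⟨0, 0, 0, 1⟩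

instance : CharZero ℍ[ℝ] :=
  charZero_of_injective_algebraMap (algebraMap ℝ ℍ[ℝ]).injective

theorem isQuatFrame_quatK_quatI : IsQuatFrame quatK quatI := by
  constructor <;> ext <;> simp

theorem inner_eq_sum_three (x y : ℝ³) : ⟪x, y⟫ = x 0 * y 0 + x 1 * y 1 + x 2 * y 2 := by
  simp [PiLp.inner_apply, Fin.sum_univ_three, mul_comm]

/-- The identification of `ℝ³` with the imaginary quaternions. -/
def toQuat : ℝ³ →ₗᵢ[ℝ] ℍ[ℝ] where
  toFun x := ⟨0, x 0, x 1, x 2⟩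
  map_add' _ _ := Quaternion.ext _ _ (add_zero _).symm rfl rfl rfl
  map_smul' _ _ := Quaternion.ext _ _ (mul_zero _).symm rfl rfl rfl
  norm_map' x := by
    rw [← sq_eq_sq₀ (norm_nonneg _) (norm_nonneg _), ← real_inner_self_eq_norm_sq,
      ← real_inner_self_eq_norm_sq, Quaternion.inner_self, Quaternion.normSq_def',
      inner_eq_sum_three]
    change (0 : ℝ) ^ 2 + x 0 ^ 2 + x 1 ^ 2 + x 2 ^ 2 = _
    ring

@[simp] theorem re_toQuat (x : ℝ³) : (toQuat x).re = 0 := rfl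
@[simp] theorem imI_toQuat (x : ℝ³) : (toQuat x).imI = x 0 := rfl
@[simp] theorem imJ_toQuat (x : ℝ³) : (toQuat x).imJ = x 1 := rfl
@[simp] theorem imK_toQuat (x : ℝ³) : (toQuat x).imK = x 2 := rfl

theorem toQuat_mul_add_mul (x y : ℝ³) :
    toQuat x * toQuat y + toQuat y * toQuat x = ((-2 * ⟪x, y⟫ : ℝ) : ℍ[ℝ]) := by
  rw [inner_eq_sum_three]
  ext <;> simp <;> ring

theorem toQuat_mul_self {x : ℝ³} (hx : ‖x‖ = 1) : toQuat x * toQuat x = -1 := by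
  have hsum := toQuat_mul_add_mul x x
  rw [real_inner_self_eq_norm_sq, hx, ← two_smul ℝ] at hsum
  refine smul_right_injective ℍ[ℝ] (two_ne_zero (α := ℝ)) (hsum.trans ?_)
  ext <;> simp

theorem isQuatFrame_toQuat {x y : ℝ³} (hx : ‖x‖ = 1) (hy : ‖y‖ = 1) (hxy : ⟪x, y⟫ = 0) :
    IsQuatFrame (toQuat x) (toQuat y) where
  left_sq := toQuat_mul_self hx
  right_sq := toQuat_mul_self hy
  anticomm := eq_neg_of_add_eq_zero_left (by rw [toQuat_mul_add_mul, hxy]; simp)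

/-- The imaginary part of a quaternion, as a vector of `ℝ³`. -/
def ofQuat : ℍ[ℝ] →L[ℝ] ℝ³ :=
  LinearMap.toContinuousLinearMap
    { toFun := fun q => !₂[q.imI, q.imJ, q.imK]
      map_add' := fun x y => by ext i; fin_cases i <;> simp
      map_smul' := fun r x => by ext i; fin_cases i <;> simp }

theorem ofQuat_apply (q : ℍ[ℝ]) : ofQuat q = !₂[q.imI, q.imJ, q.imK] := rfl

theorem ofQuat_toQuat (x : ℝ³) : ofQuat (toQuat x) = x := by
  ext i
  fin_cases i <;> simp [ofQuat_apply]

theorem toQuat_ofQuat {q : ℍ[ℝ]} (hq : q.re = 0) : toQuat (ofQuat q) = q := by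
  ext <;> simp [ofQuat_apply, hq]

/-- The rotation `x ↦ q x q⁻¹` of `ℝ³`, for a quaternion `q ≠ 0`. -/
def rotate (q : ℍ[ℝ]) : ℝ³ →L[ℝ] ℝ³ :=
  ofQuat ∘L ContinuousLinearMap.mulLeftRight ℝ ℍ[ℝ] q q⁻¹ ∘L toQuat.toContinuousLinearMap

theorem rotate_apply (q : ℍ[ℝ]) (x : ℝ³) : rotate q x = ofQuat (q * toQuat x * q⁻¹) := rfl

theorem rotate_one : rotate 1 = ContinuousLinearMap.id ℝ ℝ³ := by
  ext1 x
  simp [rotate_apply, ofQuat_toQuat]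

variable {q : ℍ[ℝ]}

theorem toQuat_rotate_mul (hq : q ≠ 0) (x : ℝ³) : toQuat (rotate q x) * q = q * toQuat x := by
  have hstar : (q * toQuat x * star q).re = 0 := by
    simp
    ring
  have hre : (q * toQuat x * q⁻¹).re = 0 := by
    rw [Quaternion.inv_def, mul_smul_comm, Quaternion.re_smul, hstar, smul_zero]
  rw [rotate_apply, toQuat_ofQuat hre, inv_mul_cancel_right₀ hq]

theorem rotate_eq_iff (hq : q ≠ 0) {x y : ℝ³} :
    rotate q x = y ↔ toQuat y * q = q * toQuat x := by
  rw [← toQuat_rotate_mul hq, mul_left_inj' hq, toQuat.injective.eq_iff, eq_comm]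

theorem norm_rotate (hq : q ≠ 0) (x : ℝ³) : ‖rotate q x‖ = ‖x‖ := by
  have hnorm := congrArg norm (toQuat_rotate_mul hq x)
  rw [norm_mul, norm_mul, toQuat.norm_map, toQuat.norm_map, mul_comm] at hnorm
  exact mul_left_cancel₀ (norm_ne_zero_iff.2 hq) hnorm

theorem inner_rotate (hq : q ≠ 0) (x y : ℝ³) : ⟪rotate q x, rotate q y⟫ = ⟪x, y⟫ :=
  LinearIsometry.inner_map_map ⟨(rotate q).toLinearMap, norm_rotate hq⟩ x y

theorem injective_rotate (hq : q ≠ 0) : Function.Injective (rotate q) :=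
  LinearIsometry.injective ⟨(rotate q).toLinearMap, norm_rotate hq⟩

theorem mapsTo_rotate (hq : q ≠ 0) :
    MapsTo (rotate q) (Metric.sphere 0 1) (Metric.sphere 0 1) := fun x hx => by
  rwa [mem_sphere_zero_iff_norm, norm_rotate hq, ← mem_sphere_zero_iff_norm]

theorem IsClosedImmersion.regHomotopic_rotate {f : ℝ → ℝ³}
    (hf : IsClosedImmersion (Metric.sphere 0 1) f) (hq : q ≠ 0) :
    RegHomotopic (Metric.sphere 0 1) f (rotate q ∘ f) := by
  have hrank : 1 < Module.rank ℝ ℍ[ℝ] := by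
    rw [Quaternion.rank_eq_four]
    norm_num
  obtain ⟨path, hpath⟩ := (isPathConnected_compl_singleton_of_one_lt_rank hrank 0).joinedIn
    1 (by simp) q (by simpa)
  have hne (s : ℝ) : path.extend s ≠ 0 := hpath _
  have hcont : Continuous fun p : ℝ × ℝ³ => rotate (path.extend p.1) p.2 := by
    simp only [rotate_apply]
    have hfst : Continuous fun p : ℝ × ℝ³ => path.extend p.1 :=
      path.continuous_extend.comp continuous_fst
    exact ofQuat.continuous.comp ((hfst.mul (toQuat.continuous.comp continuous_snd)).mul
      (hfst.inv₀ fun p => hne p.1))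
  simpa [rotate_one] using hf.regHomotopic_clm _ hcont (fun s => injective_rotate (hne s))
    fun s => mapsTo_rotate (hne s)

end Rotation

section Stereographic

open scoped Quaternion RealInnerProductSpace ContDiff
open SphericalCurve

/-- A quaternion, affine in `z`, which conjugates the north pole `k` to `stereoInv z`. -/
@[simps]
def spinor (z : ℂ) : ℍ[ℝ] := ⟨z.im, -1, 0, -z.re⟩

theorem normSq_add_one_pos (z : ℂ) : 0 < Complex.normSq z + 1 := by
  linarith [Complex.normSq_nonneg z]

theorem normSq_spinor (z : ℂ) : Quaternion.normSq (spinor z) = Complex.normSq z + 1 := by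
  simp [Quaternion.normSq_def', Complex.normSq_apply]
  ring

theorem spinor_ne_zero (z : ℂ) : spinor z ≠ 0 := by
  rw [← Quaternion.normSq_ne_zero, normSq_spinor]
  exact (normSq_add_one_pos z).ne'

theorem stereoInv_apply_zero (z : ℂ) : stereoInv z 0 = 2 * z.re / (Complex.normSq z + 1) := rfl
theorem stereoInv_apply_one (z : ℂ) : stereoInv z 1 = 2 * z.im / (Complex.normSq z + 1) := rfl
theorem stereoInv_apply_two (z : ℂ) :
    stereoInv z 2 = (Complex.normSq z - 1) / (Complex.normSq z + 1) := rfl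

theorem toQuat_stereoInv_mul_spinor (z : ℂ) :
    toQuat (stereoInv z) * spinor z = spinor z * quatK := by
  have hpos := normSq_add_one_pos z
  rw [Complex.normSq_apply] at hpos
  ext <;> simp [stereoInv_apply_zero, stereoInv_apply_one, stereoInv_apply_two,
    Complex.normSq_apply] <;> field_simp <;> ring

theorem norm_stereoInv (z : ℂ) : ‖stereoInv z‖ = 1 := by
  have hnorm := congrArg norm (toQuat_stereoInv_mul_spinor z)
  have hK : ‖quatK‖ = 1 := by
    rw [← sq_eq_sq₀ (norm_nonneg _) zero_le_one, sq, ← Quaternion.normSq_eq_norm_mul_self]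
    simp [Quaternion.normSq_def']
  rwa [norm_mul, norm_mul, hK, toQuat.norm_map, mul_comm,
    mul_right_inj' (norm_ne_zero_iff.2 (spinor_ne_zero z))] at hnorm

theorem contDiff_stereoInv : ContDiff ℝ ∞ stereoInv := by
  have hre : ContDiff ℝ ∞ fun z : ℂ => z.re := Complex.reCLM.contDiff
  have him : ContDiff ℝ ∞ fun z : ℂ => z.im := Complex.imCLM.contDiff
  have hsq : ContDiff ℝ ∞ fun z : ℂ => Complex.normSq z := by
    simp only [Complex.normSq_apply]
    exact (hre.mul hre).add (him.mul him)
  have hden := hsq.add (contDiff_const (c := (1 : ℝ)))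
  have hne (z : ℂ) : Complex.normSq z + 1 ≠ 0 := (normSq_add_one_pos z).ne'
  refine contDiff_euclidean.2 fun i => ?_
  fin_cases i
  · exact (contDiff_const.mul hre).div hden hne
  · exact (contDiff_const.mul him).div hden hne
  · exact (hsq.sub contDiff_const).div hden hne

/-- The derivative of `spinor`. -/
def spinorCLM : ℂ →L[ℝ] ℍ[ℝ] := Complex.imCLM.smulRight 1 - Complex.reCLM.smulRight quatK

theorem spinorCLM_apply (d : ℂ) : spinorCLM d = d.im • 1 - d.re • quatK := rfl

theorem hasFDerivAt_spinor (z : ℂ) : HasFDerivAt spinor spinorCLM z := by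
  have hspinor : spinor = fun w => spinorCLM w + -quatI := by
    funext w
    ext <;> simp [spinorCLM_apply]
  rw [hspinor]
  exact spinorCLM.hasFDerivAt.add_const _

theorem toQuat_fderiv_stereoInv_mul_spinor_add (z d : ℂ) :
    toQuat (fderiv ℝ stereoInv z d) * spinor z + toQuat (stereoInv z) * spinorCLM d =
      spinorCLM d * quatK := by
  have hst := (contDiff_stereoInv.differentiable (by simp) z).hasFDerivAt
  have hleft := (toQuat.toContinuousLinearMap.hasFDerivAt.comp z hst).mul'
    (hasFDerivAt_spinor z)
  have hright := (hasFDerivAt_spinor z).mul_const' quatK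
  have heq : (fun w => toQuat (stereoInv w) * spinor w) = fun w => spinor w * quatK :=
    funext toQuat_stereoInv_mul_spinor
  have := DFunLike.congr_fun (hleft.unique (heq ▸ hright)) d
  simpa [add_comm] using this

/-- The tangent vector `d` at infinity, as a quaternion orthogonal to `k`. The sign makes
`spinor z` carry it to a positive multiple of the derivative of `stereoInv` at `z` along `d`. -/
@[simps]
def tangentQuat (d : ℂ) : ℍ[ℝ] := ⟨0, d.re, -d.im, 0⟩

theorem norm_tangentQuat (d : ℂ) : ‖tangentQuat d‖ = ‖d‖ := by
  rw [← sq_eq_sq₀ (norm_nonneg _) (norm_nonneg _), sq, ← Quaternion.normSq_eq_norm_mul_self,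
    Quaternion.normSq_def', Complex.sq_norm, Complex.normSq_apply]
  simp
  ring

theorem toQuat_fderiv_stereoInv_mul_spinor (z d : ℂ) :
    toQuat (fderiv ℝ stereoInv z d) * spinor z =
      (2 / (Complex.normSq z + 1)) • (spinor z * tangentQuat d) := by
  obtain ⟨b, hb⟩ : ∃ b, b = star (spinor z) * spinorCLM d := ⟨_, rfl⟩
  have hcomm : b * quatK - quatK * b = (2 : ℝ) • tangentQuat d := by
    ext <;> simp [hb, spinorCLM_apply] <;> ring
  have hspinor : spinorCLM d = (Complex.normSq z + 1)⁻¹ • (spinor z * b) := by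
    rw [hb, ← mul_assoc, Quaternion.self_mul_star, normSq_spinor, Quaternion.coe_mul_eq_smul,
      inv_smul_smul₀ (normSq_add_one_pos z).ne']
  rw [eq_sub_of_add_eq (toQuat_fderiv_stereoInv_mul_spinor_add z d), hspinor, mul_smul_comm,
    ← mul_assoc, toQuat_stereoInv_mul_spinor, smul_mul_assoc, ← smul_sub, mul_assoc, mul_assoc,
    ← mul_sub, hcomm, mul_smul_comm, smul_smul, inv_mul_eq_div]

theorem norm_fderiv_stereoInv (z d : ℂ) :
    ‖fderiv ℝ stereoInv z d‖ = 2 / (Complex.normSq z + 1) * ‖d‖ := by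
  have hnorm := congrArg norm (toQuat_fderiv_stereoInv_mul_spinor z d)
  have hscale : 0 < 2 / (Complex.normSq z + 1) := div_pos two_pos (normSq_add_one_pos z)
  rw [norm_mul, toQuat.norm_map, norm_smul, norm_mul, norm_tangentQuat,
    Real.norm_of_nonneg hscale.le, mul_left_comm, mul_comm] at hnorm
  exact mul_left_cancel₀ (norm_ne_zero_iff.2 (spinor_ne_zero z)) hnorm

theorem injective_fderiv_stereoInv (z : ℂ) : Function.Injective (fderiv ℝ stereoInv z) := by
  rw [injective_iff_map_eq_zero]
  intro d hd
  have hscale : 2 / (Complex.normSq z + 1) ≠ 0 := (div_pos two_pos (normSq_add_one_pos z)).ne'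
  simpa [hd, hscale, eq_comm] using norm_fderiv_stereoInv z d

theorem mapsTo_stereoInv : MapsTo stereoInv univ (Metric.sphere 0 1) := fun z _ =>
  mem_sphere_zero_iff_norm.2 (norm_stereoInv z)

theorem IsClosedImmersion.stereoInv_comp {γ : ℝ → ℂ} (hγ : IsClosedImmersion univ γ) :
    IsClosedImmersion (Metric.sphere 0 1) (stereoInv ∘ γ) :=
  hγ.comp contDiff_stereoInv (fun z _ => injective_fderiv_stereoInv z) mapsTo_stereoInv

theorem RegHomotopic.stereoInv_comp {γ γ' : ℝ → ℂ} (hγ : RegHomotopic univ γ γ') :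
    RegHomotopic (Metric.sphere 0 1) (stereoInv ∘ γ) (stereoInv ∘ γ') :=
  hγ.comp contDiff_stereoInv (fun z _ => injective_fderiv_stereoInv z) mapsTo_stereoInv

end Stereographic

/-! ### Changing the rotation number by two -/

section Parity

open scoped ContDiff Quaternion Real
open Complex (I)
open SphericalCurve

theorem quatI_ne_zero : quatI ≠ 0 := fun h => by
  simpa using congrArg QuaternionAlgebra.imI h

theorem stereoInv_inv {z : ℂ} (hz : z ≠ 0) : stereoInv z⁻¹ = rotate quatI (stereoInv z) := by
  have hpos : 0 < Complex.normSq z := Complex.normSq_pos.2 hz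
  rw [eq_comm, rotate_eq_iff quatI_ne_zero]
  ext <;> simp [stereoInv_apply_zero, stereoInv_apply_one, stereoInv_apply_two] <;>
    field_simp <;> ring

theorem HasRotationNumber.inv {γ ψ : ℝ → ℂ} {m n : ℤ} (hγ : HasRotationNumber γ m)
    (hψ : ContDiff ℝ ∞ ψ) (hexp : ∀ t, γ t = Complex.exp (ψ t))
    (hturn : ∀ t, ψ (t + 1) = ψ t + 2 * π * n * I) :
    HasRotationNumber (fun t => (γ t)⁻¹) (m - 2 * n) := by
  obtain ⟨hper, φ, hφ, hderiv, hφturn⟩ := hγ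
  refine ⟨fun t => by simp only [hper t], fun t => φ t + π * I - 2 * ψ t,
    (hφ.add contDiff_const).sub (contDiff_const.mul hψ), fun t => ?_, fun t => ?_⟩
  · have hne : γ t ≠ 0 := hexp t ▸ Complex.exp_ne_zero _
    refine ((hderiv t).inv hne).congr_deriv ?_
    rw [Complex.exp_sub, Complex.exp_add, Complex.exp_pi_mul_I, two_mul, Complex.exp_add, ← hexp,
      sq, mul_neg_one]
  · simp only [hφturn, hturn]
    push_cast
    ring

/-- The `k`-fold parametrisation of the unit circle. -/
def unitCircle (k : ℤ) (t : ℝ) : ℂ := Complex.exp (2 * π * k * t * I)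

theorem norm_unitCircle (k : ℤ) (t : ℝ) : ‖unitCircle k t‖ = 1 := by
  rw [unitCircle, ← Complex.norm_exp_ofReal_mul_I (2 * π * k * t)]
  push_cast
  rfl

theorem periodic_unitCircle (k : ℤ) : Function.Periodic (unitCircle k) 1 := fun t => by
  rw [unitCircle, unitCircle, ← mul_one (Complex.exp (2 * π * k * t * I)),
    ← Complex.exp_int_mul_two_pi_mul_I k, ← Complex.exp_add]
  push_cast
  ring_nf

theorem contDiff_mul_ofReal_mul (a b : ℂ) : ContDiff ℝ ∞ fun t : ℝ => a * t * b :=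
  (contDiff_const.mul Complex.ofRealCLM.contDiff).mul contDiff_const

theorem hasDerivAt_mul_ofReal_mul (a b : ℂ) (t : ℝ) :
    HasDerivAt (fun t : ℝ => a * t * b) (a * b) t := by
  simpa using ((Complex.ofRealCLM.hasDerivAt (x := t)).const_mul a).mul_const b

theorem contDiff_unitCircle (k : ℤ) : ContDiff ℝ ∞ (unitCircle k) :=
  (contDiff_mul_ofReal_mul _ _).cexp

theorem hasDerivAt_unitCircle (k : ℤ) (t : ℝ) :
    HasDerivAt (unitCircle k) (2 * π * k * I * unitCircle k t) t :=
  (hasDerivAt_mul_ofReal_mul _ _ t).cexp.congr_deriv (mul_comm _ _)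

theorem contDiff_clog {g : ℝ → ℂ} (hg : ContDiff ℝ ∞ g) (hslit : ∀ t, g t ∈ Complex.slitPlane) :
    ContDiff ℝ ∞ fun t => Complex.log (g t) :=
  contDiff_iff_contDiffAt.2 fun t =>
    ((Complex.contDiffAt_log (hslit t)).restrict_scalars ℝ).comp t hg.contDiffAt

theorem exists_log_one_add_mul_unitCircle (k : ℤ) {w : ℂ} (hw : 1 < ‖w‖) :
    ∃ L : ℝ → ℂ, ContDiff ℝ ∞ L ∧ (∀ t, Complex.exp (L t) = 1 + w * unitCircle k t) ∧
      ∀ t, L (t + 1) = L t + 2 * π * k * I := by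
  have hw0 : w ≠ 0 := norm_pos_iff.1 (one_pos.trans hw)
  have hslit (t : ℝ) : 1 + w⁻¹ * unitCircle (-k) t ∈ Complex.slitPlane := by
    apply Complex.mem_slitPlane_of_norm_lt_one
    rw [norm_mul, norm_unitCircle, mul_one, norm_inv]
    exact inv_lt_one_of_one_lt₀ hw
  -- `1 + w e = w e (1 + w⁻¹ e⁻¹)`
  refine ⟨fun t => Complex.log w + 2 * π * k * t * I + Complex.log (1 + w⁻¹ * unitCircle (-k) t),
    (contDiff_const.add (contDiff_mul_ofReal_mul _ _)).add
      (contDiff_clog (contDiff_const.add (contDiff_const.mul (contDiff_unitCircle _))) hslit),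
    fun t => ?_, fun t => ?_⟩
  · rw [Complex.exp_add, Complex.exp_add, Complex.exp_log hw0,
      Complex.exp_log (Complex.slitPlane_ne_zero (hslit t)), ← unitCircle]
    have hinv : unitCircle k t * unitCircle (-k) t = 1 := by
      rw [unitCircle, unitCircle, ← Complex.exp_add, ← Complex.exp_zero]
      push_cast
      ring_nf
    linear_combination w * w⁻¹ * hinv + mul_inv_cancel₀ hw0
  · simp only [periodic_unitCircle (-k) t]
    push_cast
    ring

theorem exists_log_one_add_two_mul_unitCircle (k : ℤ) :
    ∃ L : ℝ → ℂ, ContDiff ℝ ∞ L ∧ (∀ t, Complex.exp (L t) = 1 + 2 * k * unitCircle k t) ∧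
      ∀ t, L (t + 1) = L t + 2 * π * k * I := by
  rcases eq_or_ne k 0 with rfl | hk
  · exact ⟨fun _ => 0, contDiff_const, by simp, by simp⟩
  · refine exists_log_one_add_mul_unitCircle k ?_
    have hone : (1 : ℝ) ≤ |(k : ℝ)| := mod_cast Int.one_le_abs hk
    rw [norm_mul, Complex.norm_ofNat, Complex.norm_intCast]
    linarith

/-- A logarithm of a closed curve winding once around the origin, whose rotation number is
`k + 1`. -/
def loopLog (k : ℤ) (t : ℝ) : ℂ := 2 * π * t * I + 2 * unitCircle k t

theorem contDiff_loopLog (k : ℤ) : ContDiff ℝ ∞ (loopLog k) :=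
  (contDiff_mul_ofReal_mul _ _).add (contDiff_const.mul (contDiff_unitCircle k))

theorem loopLog_add_one (k : ℤ) (t : ℝ) : loopLog k (t + 1) = loopLog k t + 2 * π * I := by
  rw [loopLog, loopLog, periodic_unitCircle]
  push_cast
  ring

theorem hasRotationNumber_exp_loopLog (k : ℤ) :
    HasRotationNumber (fun t => Complex.exp (loopLog k t)) (k + 1) := by
  obtain ⟨L, hL, hexp, hturn⟩ := exists_log_one_add_two_mul_unitCircle k
  refine ⟨fun t => by simp only [loopLog_add_one, Complex.exp_periodic _],
    fun t => loopLog k t + (Complex.log (2 * π * I) + L t),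
    (contDiff_loopLog k).add (contDiff_const.add hL), fun t => ?_, fun t => ?_⟩
  · have hderiv : HasDerivAt (loopLog k) (2 * π * I * (1 + 2 * k * unitCircle k t)) t :=
      ((hasDerivAt_mul_ofReal_mul _ _ t).add
        ((hasDerivAt_unitCircle k t).const_mul 2)).congr_deriv (by ring)
    rw [Complex.exp_add (loopLog k t), Complex.exp_add _ (L t), hexp,
      Complex.exp_log (by simp [Real.pi_ne_zero])]
    exact hderiv.cexp
  · simp only [loopLog_add_one, hturn]
    push_cast
    ring

theorem exists_regHomotopic_stereoInv_sub_two (m : ℤ) :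
    ∃ γ γ' : ℝ → ℂ, HasRotationNumber γ m ∧ HasRotationNumber γ' (m - 2) ∧
      RegHomotopic (Metric.sphere 0 1) (stereoInv ∘ γ) (stereoInv ∘ γ') := by
  have hγ := hasRotationNumber_exp_loopLog (m - 1)
  rw [sub_add_cancel] at hγ
  refine ⟨_, _, hγ, hγ.inv (n := 1) (contDiff_loopLog _) (fun _ => rfl) fun t => ?_, ?_⟩
  · rw [loopLog_add_one, Int.cast_one, mul_one]
  · have hrot := hγ.isClosedImmersion.stereoInv_comp.regHomotopic_rotate quatI_ne_zero
    convert hrot using 2 with t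
    exact funext fun t => stereoInv_inv (Complex.exp_ne_zero _)

theorem HasRotationNumber.regHomotopic_stereoInv_sub {γ γ' : ℝ → ℂ} {m : ℤ} (n : ℕ)
    (hγ : HasRotationNumber γ m) (hγ' : HasRotationNumber γ' (m - 2 * n)) :
    RegHomotopic (Metric.sphere 0 1) (stereoInv ∘ γ) (stereoInv ∘ γ') := by
  induction n generalizing γ m with
  | zero => exact (hγ.regHomotopic (by simpa using hγ')).stereoInv_comp
  | succ n ih =>
    obtain ⟨δ, δ', hδ, hδ', hreg⟩ := exists_regHomotopic_stereoInv_sub_two m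
    refine ((hγ.regHomotopic hδ).stereoInv_comp.trans hreg).trans (ih hδ' ?_)
    convert hγ' using 1
    push_cast
    ring

theorem HasRotationNumber.regHomotopic_stereoInv {γ γ' : ℝ → ℂ} {m m' : ℤ}
    (hγ : HasRotationNumber γ m) (hγ' : HasRotationNumber γ' m')
    (hm : (m : ZMod 2) = m') :
    RegHomotopic (Metric.sphere 0 1) (stereoInv ∘ γ) (stereoInv ∘ γ') := by
  obtain ⟨d, hd⟩ := (ZMod.intCast_eq_intCast_iff_dvd_sub m m' 2).1 hm
  push_cast at hd
  rcases le_total m' m with hle | hle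
  · obtain ⟨n, hn⟩ := Int.eq_ofNat_of_zero_le (show 0 ≤ -d by linarith)
    exact hγ.regHomotopic_stereoInv_sub n (by rwa [← hn, show m - 2 * -d = m' by linarith])
  · obtain ⟨n, hn⟩ := Int.eq_ofNat_of_zero_le (show 0 ≤ d by linarith)
    exact (hγ'.regHomotopic_stereoInv_sub n
      (by rwa [← hn, show m' - 2 * d = m by linarith])).symm

end Parity

/-! ### From the Whitney number to the rotation number -/

section WhitneyNumber

open scoped ContDiff Quaternion Real RealInnerProductSpace Topology
open Complex (I)
open SphericalCurve

local notation "ℝ³" => EuclideanSpace ℝ (Fin 3)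

theorem contDiff_of_cexp {φ : ℝ → ℂ} (hφ : Continuous φ)
    (hexp : ContDiff ℝ ∞ fun t => Complex.exp (φ t)) : ContDiff ℝ ∞ φ := by
  refine contDiff_iff_contDiffAt.2 fun a => ?_
  have hquot : ContDiffAt ℝ ∞ (fun t => Complex.exp (φ t) / Complex.exp (φ a)) a :=
    hexp.contDiffAt.div_const _
  have hlog : ContDiffAt ℝ ∞ (fun t => Complex.log (Complex.exp (φ t) / Complex.exp (φ a))) a :=
    ((Complex.contDiffAt_log (by simp)).restrict_scalars ℝ).comp a hquot
  refine (contDiffAt_const (c := φ a)).add hlog |>.congr_of_eventuallyEq ?_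
  have him : Continuous fun t => (φ t - φ a).im := by fun_prop
  have hnear : ∀ᶠ t in 𝓝 a, (φ t - φ a).im ∈ Ioo (-π) π :=
    him.continuousAt.eventually_mem (Ioo_mem_nhds (by simp [Real.pi_pos]) (by simp [Real.pi_pos]))
  filter_upwards [hnear] with t ht
  rw [← Complex.exp_sub, Complex.log_exp ht.1 ht.2.le, add_sub_cancel]

theorem IsClosedImmersion.hasRotationNumber {γ : ℝ → ℂ} {θ : ℝ → ℝ} {m : ℤ}
    (hγ : IsClosedImmersion univ γ) (hθ : Continuous θ)
    (hangle : ∀ t, deriv γ t = ‖deriv γ t‖ * Complex.exp (θ t * I))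
    (hm : θ 1 - θ 0 = 2 * π * m) : HasRotationNumber γ m := by
  have hγ' : ContDiff ℝ ∞ (deriv γ) := (contDiff_infty_iff_deriv.1 hγ.contDiff).2
  have hnorm (t : ℝ) : ‖deriv γ t‖ ≠ 0 := norm_ne_zero_iff.2 (hγ.deriv_ne_zero t)
  let φ : ℝ → ℂ := fun t => (Real.log ‖deriv γ t‖ : ℝ) + θ t * I
  have hexp (t : ℝ) : Complex.exp (φ t) = deriv γ t := by
    rw [Complex.exp_add, ← Complex.ofReal_exp, Real.exp_log (norm_pos_iff.2 (hγ.deriv_ne_zero t)),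
      ← hangle]
  have hφ : Continuous φ := by
    have := hγ'.continuous.norm.log hnorm
    fun_prop
  refine ⟨hγ.periodic, φ, contDiff_of_cexp hφ (by simpa only [hexp]),
    fun t => hexp t ▸ hγ.hasDerivAt t, fun t => ?_⟩
  have hcont : Continuous fun t => φ (t + 1) - φ t := by fun_prop
  have hone (t : ℝ) : Complex.exp (φ (t + 1) - φ t) = 1 := by
    rw [Complex.exp_sub, hexp, hexp, hγ.periodic_deriv, div_self (hγ.deriv_ne_zero t)]
  have hconst : φ (t + 1) - φ t = φ (0 + 1) - φ 0 := Complex.isCoveringMap_exp.const_of_comp hcont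
    (fun a b => Subtype.ext ((hone a).trans (hone b).symm)) t 0
  have hzero : φ (0 + 1) - φ 0 = 2 * π * m * I := by
    simp only [φ, hγ.periodic_deriv 0]
    rw [zero_add, add_sub_add_left_eq_sub, ← sub_mul]
    exact_mod_cast congrArg (fun x : ℝ => (x : ℂ) * I) hm
  rw [← hzero, ← hconst, add_sub_cancel]

/-- Stereographic projection from the north pole onto the equatorial plane; at the pole it has the
junk value zero. -/
@[simps]
def stereoProj (w : ℝ³) : ℂ := ⟨w 0 / (1 - w 2), w 1 / (1 - w 2)⟩

theorem stereoInv_stereoProj {w : ℝ³} (hw : ‖w‖ = 1) (hpole : w 2 ≠ 1) :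
    stereoInv (stereoProj w) = w := by
  have hsum : w 0 * w 0 + w 1 * w 1 + w 2 * w 2 = 1 := by
    rw [← inner_eq_sum_three, real_inner_self_eq_norm_sq, hw, one_pow]
  have hne : 1 - w 2 ≠ 0 := sub_ne_zero.2 hpole.symm
  have hnormSq : Complex.normSq (stereoProj w) = 2 / (1 - w 2) - 1 := by
    rw [Complex.normSq_apply, stereoProj_re, stereoProj_im]
    field_simp
    linarith
  ext i
  fin_cases i
  · simp [stereoInv_apply_zero, hnormSq]
    field_simp
  · simp [stereoInv_apply_one, hnormSq]
    field_simp
  · simp [stereoInv_apply_two, hnormSq]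
    field_simp
    ring

theorem contDiffOn_stereoProj : ContDiffOn ℝ ∞ stereoProj {w | w 2 ≠ 1} := by
  have hcoord (i : Fin 3) : ContDiffOn ℝ ∞ (fun w : ℝ³ => w i) {w | w 2 ≠ 1} :=
    (contDiff_euclidean.1 contDiff_id i).contDiffOn
  have hdiv (i : Fin 3) : ContDiffOn ℝ ∞ (fun w : ℝ³ => w i / (1 - w 2)) {w | w 2 ≠ 1} :=
    (hcoord i).div (contDiffOn_const.sub (hcoord 2)) fun w hw => sub_ne_zero.2 (Ne.symm hw)
  exact Complex.equivRealProdCLM.symm.contDiff.comp_contDiffOn ((hdiv 0).prodMk (hdiv 1))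

theorem stereoInv_comp_stereoProj {f : ℝ → ℝ³} (hf : IsClosedImmersion (Metric.sphere 0 1) f)
    (hpole : ∀ t, f t 2 ≠ 1) : stereoInv ∘ stereoProj ∘ f = f :=
  funext fun t => stereoInv_stereoProj (mem_sphere_zero_iff_norm.1 (hf.mem t)) (hpole t)

theorem IsClosedImmersion.stereoProj_comp {f : ℝ → ℝ³}
    (hf : IsClosedImmersion (Metric.sphere 0 1) f) (hpole : ∀ t, f t 2 ≠ 1) :
    IsClosedImmersion univ (stereoProj ∘ f) := by
  have hsmooth : ContDiff ℝ ∞ (stereoProj ∘ f) :=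
    contDiffOn_stereoProj.comp_contDiff hf.contDiff hpole
  refine ⟨fun _ => mem_univ _, hf.periodic.comp _, hsmooth, fun t hzero => ?_⟩
  have hchain := fderiv_comp_deriv t (contDiff_stereoInv.differentiable (by simp) _)
    (hsmooth.differentiable (by simp) t)
  rw [stereoInv_comp_stereoProj hf hpole, hzero, map_zero] at hchain
  exact hf.deriv_ne_zero t hchain

theorem exists_rotate_coords {x y v : ℝ³} (hx : ‖x‖ = 1) (hy : ‖y‖ = 1) (hv : ‖v‖ = 1)
    (hxy : ⟪x, y⟫ = 0) (hvx : ⟪v, x⟫ = 0) (hvy : ⟪v, y⟫ = 0) :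
    ∃ q : ℍ[ℝ], q ≠ 0 ∧ ∃ ε : ℤˣ, ∀ z, rotate q z 0 = ⟪x, z⟫ ∧
      rotate q z 1 = (ε : ℤ) * ⟪y, z⟫ ∧ rotate q z 2 = ⟪v, z⟫ := by
  obtain ⟨q, hq, hqv, hqx⟩ := (isQuatFrame_toQuat hv hx hvx).exists_ne_zero_intertwines
    isQuatFrame_quatK_quatI
  have hrotv : rotate q v = ofQuat quatK := by
    rw [rotate_eq_iff hq, toQuat_ofQuat rfl, hqv]
  have hrotx : rotate q x = ofQuat quatI := by
    rw [rotate_eq_iff hq, toQuat_ofQuat rfl, hqx]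
  have hcoord0 (z : ℝ³) : rotate q z 0 = ⟪x, z⟫ := by
    rw [← inner_rotate hq, hrotx, inner_eq_sum_three]
    simp [ofQuat_apply]
  have hcoord2 (z : ℝ³) : rotate q z 2 = ⟪v, z⟫ := by
    rw [← inner_rotate hq, hrotv, inner_eq_sum_three]
    simp [ofQuat_apply]
  have hinner (z : ℝ³) : ⟪y, z⟫ = rotate q y 1 * rotate q z 1 := by
    rw [← inner_rotate hq, inner_eq_sum_three, hcoord0 y, hcoord2 y, hxy, hvy]
    ring
  have hsq : rotate q y 1 * rotate q y 1 = 1 := by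
    rw [← hinner, real_inner_self_eq_norm_sq, hy, one_pow]
  obtain ⟨ε, hε⟩ : ∃ ε : ℤˣ, rotate q y 1 = (ε : ℤ) := by
    rcases mul_self_eq_one_iff.1 hsq with h | h
    exacts [⟨1, by simpa using h⟩, ⟨-1, by simpa using h⟩]
  refine ⟨q, hq, ε, fun z => ⟨hcoord0 z, ?_, hcoord2 z⟩⟩
  rw [hinner, ← hε, ← mul_assoc, hsq, one_mul]

/-- The coordinates in which Mathlib's `stereographic'` expresses a point of the equatorial plane:
it projects onto the plane at twice the distance from the pole, whence the factor `2`, and the basis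
of that plane is not known to be oriented, whence the sign `ε`. -/
def planeCoords (ε : ℤˣ) : ℂ →L[ℝ] EuclideanSpace ℝ (Fin 2) :=
  LinearMap.toContinuousLinearMap
    { toFun := fun z => !₂[2 * z.re, 2 * ((ε : ℤ) * z.im)]
      map_add' := fun x y => by ext i; fin_cases i <;> simp <;> ring
      map_smul' := fun r x => by ext i; fin_cases i <;> simp <;> ring }

theorem planeCoords_apply (ε : ℤˣ) (z : ℂ) :
    planeCoords ε z = !₂[2 * z.re, 2 * ((ε : ℤ) * z.im)] := rfl

theorem eq_norm_mul_exp_of_planeCoords_eq {ε : ℤˣ} {d : ℂ} {r θ : ℝ} (hr : 0 ≤ r)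
    (hd : planeCoords ε d = r • (WithLp.equiv 2 _).symm ![Real.cos θ, Real.sin θ]) :
    d = ‖d‖ * Complex.exp (((ε : ℤ) * θ : ℝ) * I) := by
  have hre : 2 * d.re = r * Real.cos θ := congrArg (fun w : EuclideanSpace ℝ (Fin 2) => w 0) hd
  have him : 2 * ((ε : ℤ) * d.im) = r * Real.sin θ :=
    congrArg (fun w : EuclideanSpace ℝ (Fin 2) => w 1) hd
  have hexp : d = (r / 2 : ℝ) * Complex.exp (((ε : ℤ) * θ : ℝ) * I) := by
    apply Complex.ext
    · rw [Complex.re_ofReal_mul, Complex.exp_ofReal_mul_I_re]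
      rcases Int.units_eq_one_or ε with rfl | rfl <;> simp <;> linarith
    · rw [Complex.im_ofReal_mul, Complex.exp_ofReal_mul_I_im]
      rcases Int.units_eq_one_or ε with rfl | rfl <;> simp at him ⊢ <;> linarith
  have hnorm : ‖d‖ = r / 2 := by
    rw [hexp, norm_mul, Complex.norm_exp_ofReal_mul_I, mul_one, Complex.norm_real,
      Real.norm_of_nonneg (by positivity)]
  rwa [hnorm]

theorem SphericalCurve.exists_proj_eq (c : SphericalCurve) (v : Metric.sphere (0 : ℝ³) 1) :
    ∃ q : ℍ[ℝ], q ≠ 0 ∧ (∀ z, rotate q z 2 = ⟪(v : ℝ³), z⟫) ∧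
      ∃ ε : ℤˣ, c.proj v = planeCoords ε ∘ stereoProj ∘ rotate q ∘ c.toFun := by
  have : Fact (Module.finrank ℝ ℝ³ = 2 + 1) := ⟨by simp⟩
  let b := OrthonormalBasis.fromOrthogonalSpanSingleton (𝕜 := ℝ) 2 (ne_zero_of_mem_unit_sphere v)
  have hbv (i : Fin 2) : ⟪(v : ℝ³), b i⟫ = 0 :=
    Submodule.mem_orthogonal_singleton_iff_inner_right.1 (b i).2
  have hproj (t : ℝ) (i : Fin 2) :
      c.proj v t i = 2 / (1 - ⟪(v : ℝ³), c.toFun t⟫) * ⟪(b i : ℝ³), c.toFun t⟫ := by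
    change b.repr (stereographic (norm_eq_of_mem_sphere v) (c.pt t)) i = _
    rw [stereographic_apply, map_smul, PiLp.smul_apply, OrthonormalBasis.repr_apply_apply,
      smul_eq_mul]
    exact congrArg _ (Submodule.inner_orthogonalProjectionOnto_eq_of_mem_left (b i) (c.toFun t))
  obtain ⟨q, hq, ε, hcoords⟩ := exists_rotate_coords (x := (b 0 : ℝ³)) (y := b 1)
    (b.orthonormal.1 0) (b.orthonormal.1 1) (norm_eq_of_mem_sphere v)
    (b.orthonormal.2 zero_ne_one) (hbv 0) (hbv 1)
  have hε : ((ε : ℤ) : ℝ) * (ε : ℤ) = 1 := mod_cast Int.units_coe_mul_self ε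
  refine ⟨q, hq, fun z => (hcoords z).2.2, ε, ?_⟩
  ext t i
  obtain ⟨h0, h1, h2⟩ := hcoords (c.toFun t)
  rw [hproj]
  fin_cases i
  · simp [planeCoords_apply, h0, h2]
    ring
  · simp [planeCoords_apply, h1, h2]
    linear_combination (-(2 * ⟪(b 1 : ℝ³), c.toFun t⟫ / (1 - ⟪(v : ℝ³), c.toFun t⟫))) * hε

theorem SphericalCurve.HasWhitney.exists_regHomotopic_stereoInv {c : SphericalCurve} {w : ZMod 2}
    (hw : c.HasWhitney w) : ∃ γ m, HasRotationNumber γ m ∧ (m : ZMod 2) = w ∧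
      RegHomotopic (Metric.sphere 0 1) c.toFun (stereoInv ∘ γ) := by
  obtain ⟨v, hv, m, θ, hθ, hangle, hm, rfl⟩ := hw
  obtain ⟨q, hq, hq2, ε, hproj⟩ := c.exists_proj_eq v
  have hrot : IsClosedImmersion (Metric.sphere 0 1) (rotate q ∘ c.toFun) :=
    c.isClosedImmersion.comp (rotate q).contDiff (fun _ _ => by simpa using injective_rotate hq)
      (mapsTo_rotate hq)
  have hpole (t : ℝ) : (rotate q ∘ c.toFun) t 2 ≠ 1 := by
    rw [Function.comp_apply, hq2, Ne,
      inner_eq_one_iff_of_norm_eq_one (norm_eq_of_mem_sphere v) (c.norm_one t)]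
    exact (hv t).symm
  have hγ := hrot.stereoProj_comp hpole
  refine ⟨stereoProj ∘ rotate q ∘ c.toFun, ε * m,
    hγ.hasRotationNumber (θ := fun t => (ε : ℤ) * θ t) (continuous_const.mul hθ) (fun t => ?_) ?_,
    ?_, ?_⟩
  · have hderiv := (planeCoords ε).hasFDerivAt.comp_hasDerivAt t (hγ.hasDerivAt t)
    rw [← hproj] at hderiv
    exact eq_norm_mul_exp_of_planeCoords_eq (norm_nonneg _) (hderiv.deriv ▸ hangle t)
  · push_cast
    linear_combination ((ε : ℤ) : ℝ) * hm
  · rcases Int.units_eq_one_or ε with rfl | rfl <;> simp [ZMod.neg_eq_self_mod_two]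
  · rw [stereoInv_comp_stereoProj hrot hpole]
    exact c.isClosedImmersion.regHomotopic_rotate hq

end WhitneyNumber

/-! ### Invariance of the parity -/

section SpinMonodromy

open scoped Quaternion

/-- The spinor lift of a loop of frames: `q` is a continuous path of quaternions conjugating the
standard frame `(k, i)` to `(p, u)`, and `σ` is the factor by which `q` changes over one period.
Since `q` need not be normalised, only the sign of `σ` is an invariant of `(p, u)`. -/
def HasSpinMonodromy (p u : ℝ → ℍ[ℝ]) (σ : ℝ) : Prop :=
  ∃ q : ℝ → ℍ[ℝ], Continuous q ∧ (∀ t, q t ≠ 0) ∧ (∀ t, q t * quatK = p t * q t) ∧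
    (∀ t, q t * quatI = u t * q t) ∧ q 1 = σ • q 0

theorem eq_coe_re_of_commute_quatK_quatI {x : ℍ[ℝ]} (hK : Commute x quatK)
    (hI : Commute x quatI) : x = (x.re : ℍ[ℝ]) := by
  have hi : x.imI = 0 := by simpa [neg_eq_self] using congrArg QuaternionAlgebra.imJ hK.eq
  have hj : x.imJ = 0 := by simpa [neg_eq_self] using congrArg QuaternionAlgebra.imK hI.eq
  have hk : x.imK = 0 := by simpa [self_eq_neg] using congrArg QuaternionAlgebra.imJ hI.eq
  ext <;> simp [hi, hj, hk]

theorem commute_inv_mul_of_mul_eq_mul {D : Type*} [DivisionRing D] {q q' a b : D} (hq' : q' ≠ 0)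
    (h : q * a = b * q) (h' : q' * a = b * q') : Commute (q'⁻¹ * q) a := by
  have hinv : q'⁻¹ * b = a * q'⁻¹ := by
    rw [inv_mul_eq_iff_eq_mul₀ hq', ← mul_assoc, h', mul_inv_cancel_right₀ hq']
  rw [commute_iff_eq, mul_assoc, h, ← mul_assoc, hinv, mul_assoc]

theorem eq_re_smul_of_intertwines {q q' p u : ℍ[ℝ]} (hq' : q' ≠ 0) (hp : q * quatK = p * q)
    (hp' : q' * quatK = p * q') (hu : q * quatI = u * q) (hu' : q' * quatI = u * q') :
    q = (q'⁻¹ * q).re • q' := by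
  have hreal := eq_coe_re_of_commute_quatK_quatI (commute_inv_mul_of_mul_eq_mul hq' hp hp')
    (commute_inv_mul_of_mul_eq_mul hq' hu hu')
  rw [← Quaternion.coe_mul_eq_smul, Quaternion.coe_commutes, ← hreal, mul_inv_cancel_left₀ hq']

theorem mul_pos_of_continuous_of_ne_zero {r : ℝ → ℝ} (hr : Continuous r) (hne : ∀ t, r t ≠ 0)
    (a b : ℝ) : 0 < r a * r b := by
  by_contra! hle
  have hzero : (0 : ℝ) ∈ uIcc (r a) (r b) := by
    rw [mem_uIcc]
    have := mul_nonpos_iff.1 hle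
    tauto
  obtain ⟨t, -, ht⟩ := intermediate_value_uIcc hr.continuousOn hzero
  exact hne t ht

theorem HasSpinMonodromy.mul_nonneg {p u : ℝ → ℍ[ℝ]} {σ σ' : ℝ} (h : HasSpinMonodromy p u σ)
    (h' : HasSpinMonodromy p u σ') : 0 ≤ σ * σ' := by
  obtain ⟨q, hq, hq0, hK, hI, hσ⟩ := h
  obtain ⟨q', hq', hq0', hK', hI', hσ'⟩ := h'
  obtain ⟨r, hr⟩ : ∃ r : ℝ → ℝ, r = fun t => ((q' t)⁻¹ * q t).re := ⟨_, rfl⟩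
  have hprop (t : ℝ) : q t = r t • q' t :=
    hr ▸ eq_re_smul_of_intertwines (hq0' t) (hK t) (hK' t) (hI t) (hI' t)
  have hcont : Continuous r := hr ▸ Quaternion.continuous_re.comp ((hq'.inv₀ hq0').mul hq)
  have hne (t : ℝ) : r t ≠ 0 := fun hzero => hq0 t (by rw [hprop, hzero, zero_smul])
  have hscale : r 1 * σ' = σ * r 0 := by
    refine smul_left_injective ℝ (hq0' 0) ?_
    simp only [mul_smul]
    rw [← hσ', ← hprop, ← hprop, hσ]
  refine nonneg_of_mul_nonneg_left ?_ (mul_pos_of_continuous_of_ne_zero hcont hne 0 1)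
  calc 0 ≤ (σ * r 0) ^ 2 := sq_nonneg _
    _ = σ * σ' * (r 0 * r 1) := by linear_combination (-(σ * r 0)) * hscale

theorem HasSpinMonodromy.of_intertwiner_ne_zero {p u p' u' : ℝ → ℍ[ℝ]} {σ : ℝ}
    (h : HasSpinMonodromy p u σ) (hframe : ∀ t, IsQuatFrame (p t) (u t))
    (hframe' : ∀ t, IsQuatFrame (p' t) (u' t))
    (hcont : Continuous fun t => intertwiner (p t) (u t) (p' t) (u' t) 1)
    (hper : Function.Periodic (fun t => intertwiner (p t) (u t) (p' t) (u' t) 1) 1)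
    (hne : ∀ t ∈ Icc (0 : ℝ) 1, intertwiner (p t) (u t) (p' t) (u' t) 1 ≠ 0) :
    HasSpinMonodromy p' u' σ := by
  obtain ⟨q, hq, hq0, hK, hI, hσ⟩ := h
  have hne_all (t : ℝ) : intertwiner (p t) (u t) (p' t) (u' t) 1 ≠ 0 := by
    obtain ⟨t₀, ht₀, heq⟩ := hper.exists_mem_Ico₀ one_pos t
    exact heq ▸ hne t₀ (Ico_subset_Icc_self ht₀)
  refine ⟨fun t => intertwiner (p t) (u t) (p' t) (u' t) 1 * q t, hcont.mul hq,
    fun t => mul_ne_zero (hne_all t) (hq0 t), fun t => ?_, fun t => ?_, ?_⟩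
  · rw [mul_assoc, hK, ← mul_assoc, (hframe t).intertwiner_mul_left (hframe' t), mul_assoc]
  · rw [mul_assoc, hI, ← mul_assoc, (hframe t).intertwiner_mul_right (hframe' t), mul_assoc]
  · have hend := hper 0
    simp only [zero_add] at hend
    simp only [hend, hσ, mul_smul_comm]

section Family

variable {P U : ℝ → ℝ → ℍ[ℝ]}

theorem continuous_intertwiner_family (hP : Continuous fun x : ℝ × ℝ => P x.1 x.2)
    (hU : Continuous fun x : ℝ × ℝ => U x.1 x.2) :
    Continuous fun x : (ℝ × ℝ) × ℝ =>
      intertwiner (P x.1.1 x.2) (U x.1.1 x.2) (P x.1.2 x.2) (U x.1.2 x.2) 1 := by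
  have hfst : Continuous fun x : (ℝ × ℝ) × ℝ => (x.1.1, x.2) := by fun_prop
  have hsnd : Continuous fun x : (ℝ × ℝ) × ℝ => (x.1.2, x.2) := by fun_prop
  have hP₁ := hP.comp hfst
  have hP₂ := hP.comp hsnd
  have hU₁ := hU.comp hfst
  have hU₂ := hU.comp hsnd
  simp only [Function.comp_def] at hP₁ hP₂ hU₁ hU₂
  simp only [intertwiner]
  fun_prop

theorem eventually_intertwiner_family_ne_zero (hP : Continuous fun x : ℝ × ℝ => P x.1 x.2)
    (hU : Continuous fun x : ℝ × ℝ => U x.1 x.2) (hframe : ∀ s t, IsQuatFrame (P s t) (U s t))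
    (s : ℝ) : ∀ᶠ x : ℝ × ℝ in nhds (s, s), ∀ t ∈ Icc (0 : ℝ) 1,
      intertwiner (P x.1 t) (U x.1 t) (P x.2 t) (U x.2 t) 1 ≠ 0 := by
  refine isCompact_Icc.eventually_forall_of_forall_eventually fun t _ =>
    (continuous_intertwiner_family hP hU).continuousAt.eventually_ne ?_
  simp [(hframe s t).intertwiner_self_one]

theorem HasSpinMonodromy.of_family (hP : Continuous fun x : ℝ × ℝ => P x.1 x.2)
    (hU : Continuous fun x : ℝ × ℝ => U x.1 x.2) (hframe : ∀ s t, IsQuatFrame (P s t) (U s t))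
    (hperP : ∀ s, Function.Periodic (P s) 1) (hperU : ∀ s, Function.Periodic (U s) 1) {σ : ℝ}
    {s₀ : ℝ} (h : HasSpinMonodromy (P s₀) (U s₀) σ) (s₁ : ℝ) :
    HasSpinMonodromy (P s₁) (U s₁) σ := by
  have hcont (s s' : ℝ) :
      Continuous fun t => intertwiner (P s t) (U s t) (P s' t) (U s' t) 1 :=
    (continuous_intertwiner_family hP hU).comp (f := fun t => ((s, s'), t)) (by fun_prop)
  have htransport (s s' : ℝ)
      (hne : ∀ t ∈ Icc (0 : ℝ) 1, intertwiner (P s t) (U s t) (P s' t) (U s' t) 1 ≠ 0)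
      (hs : HasSpinMonodromy (P s) (U s) σ) : HasSpinMonodromy (P s') (U s') σ :=
    hs.of_intertwiner_ne_zero (hframe s) (hframe s') (hcont s s')
      (fun t => by simp only [hperP s t, hperU s t, hperP s' t, hperU s' t]) hne
  have hopen : IsOpen {s | HasSpinMonodromy (P s) (U s) σ} := by
    refine isOpen_iff_mem_nhds.2 fun s hs => ?_
    filter_upwards [(Continuous.prodMk_right s).tendsto s
      (eventually_intertwiner_family_ne_zero hP hU hframe s)] with s' hs'
    exact htransport s s' hs' hs
  have hclosed : IsClosed {s | HasSpinMonodromy (P s) (U s) σ} := by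
    refine isOpen_compl_iff.1 (isOpen_iff_mem_nhds.2 fun s hs => ?_)
    filter_upwards [(Continuous.prodMk_left s).tendsto s
      (eventually_intertwiner_family_ne_zero hP hU hframe s)] with s' hs' hmem
    exact hs (htransport s' s hs' hmem)
  exact eq_univ_iff_forall.1 (IsClopen.eq_univ ⟨hclosed, hopen⟩ ⟨s₀, h⟩) s₁

end Family

end SpinMonodromy

section SpinMonodromyOfCurve

open scoped Quaternion RealInnerProductSpace ContDiff Real
open Complex (I)
open SphericalCurve

local notation "ℝ³" => EuclideanSpace ℝ (Fin 3)

/-- The unit tangent vector of a curve (zero where the velocity vanishes). -/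
def unitTangent {E : Type*} [NormedAddCommGroup E] [NormedSpace ℝ E] (f : ℝ → E) (t : ℝ) : E :=
  ‖deriv f t‖⁻¹ • deriv f t

theorem IsClosedImmersion.inner_deriv_eq_zero {E : Type*} [NormedAddCommGroup E]
    [InnerProductSpace ℝ E] {f : ℝ → E} {r : ℝ} (hf : IsClosedImmersion (Metric.sphere 0 r) f)
    (t : ℝ) : ⟪f t, deriv f t⟫ = 0 := by
  have hconst : (fun t => ⟪f t, f t⟫) = fun _ => r ^ 2 := funext fun t => by
    rw [real_inner_self_eq_norm_sq, mem_sphere_zero_iff_norm.1 (hf.mem t)]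
  have hderiv := (hf.hasDerivAt t).inner ℝ (hf.hasDerivAt t)
  rw [hconst] at hderiv
  have hsum := hderiv.unique (hasDerivAt_const t (r ^ 2))
  rw [real_inner_comm (f t) (deriv f t)] at hsum
  linarith

/-- The curve `f` on the unit sphere, framed by its position and unit tangent, has spinor
monodromy `σ`. -/
def HasTangentMonodromy (f : ℝ → ℝ³) (σ : ℝ) : Prop :=
  HasSpinMonodromy (fun t => toQuat (f t)) (fun t => toQuat (unitTangent f t)) σ

theorem IsClosedImmersion.isQuatFrame {f : ℝ → ℝ³}
    (hf : IsClosedImmersion (Metric.sphere 0 1) f) (t : ℝ) :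
    IsQuatFrame (toQuat (f t)) (toQuat (unitTangent f t)) := by
  refine isQuatFrame_toQuat (mem_sphere_zero_iff_norm.1 (hf.mem t)) ?_ ?_
  · exact norm_smul_inv_norm (𝕜 := ℝ) (hf.deriv_ne_zero t)
  · rw [unitTangent, inner_smul_right, hf.inner_deriv_eq_zero, mul_zero]

theorem RegHomotopic.hasTangentMonodromy {f g : ℝ → ℝ³} {σ : ℝ}
    (hfg : RegHomotopic (Metric.sphere 0 1) f g) (hf : HasTangentMonodromy f σ) :
    HasTangentMonodromy g σ := by
  obtain ⟨H, hH, hH', himm, rfl, rfl⟩ := hfg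
  have hunit : Continuous fun x : ℝ × ℝ => unitTangent (H x.1) x.2 :=
    (hH'.norm.inv₀ fun x => norm_ne_zero_iff.2 ((himm x.1).deriv_ne_zero x.2)).smul hH'
  exact HasSpinMonodromy.of_family (P := fun s t => toQuat (H s t))
    (U := fun s t => toQuat (unitTangent (H s) t)) (toQuat.continuous.comp hH)
    (toQuat.continuous.comp hunit) (fun s => (himm s).isQuatFrame)
    (fun s => (himm s).periodic.comp toQuat)
    (fun s t => by simp only [unitTangent, (himm s).periodic_deriv t]) hf 1

/-- The rotor about the polar axis turning `i` to `tangentQuat (exp (θ * I))`. -/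
@[simps]
def polarRotor (θ : ℝ) : ℍ[ℝ] := ⟨Real.cos (θ / 2), 0, 0, -Real.sin (θ / 2)⟩

theorem polarRotor_ne_zero (θ : ℝ) : polarRotor θ ≠ 0 := by
  rw [← Quaternion.normSq_ne_zero, Quaternion.normSq_def']
  simp

theorem continuous_polarRotor : Continuous polarRotor := by
  have hlin : polarRotor = fun θ => Real.cos (θ / 2) • (1 : ℍ[ℝ]) - Real.sin (θ / 2) • quatK := by
    funext θ
    ext <;> simp
  rw [hlin]
  fun_prop

theorem polarRotor_mul_quatK (θ : ℝ) : polarRotor θ * quatK = quatK * polarRotor θ := by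
  ext <;> simp

theorem tangentQuat_cexp_mul_polarRotor (z : ℂ) :
    tangentQuat (Complex.exp z) * polarRotor z.im =
      Real.exp z.re • (polarRotor z.im * quatI) := by
  obtain ⟨α, hα⟩ : ∃ α, z.im = 2 * α := ⟨z.im / 2, by ring⟩
  have hsq := Real.sin_sq_add_cos_sq α
  ext <;> simp [Complex.exp_re, Complex.exp_im, hα, Real.cos_two_mul', Real.sin_two_mul]
  · linear_combination (Real.exp z.re * Real.cos α) * hsq
  · linear_combination (-(Real.exp z.re * Real.sin α)) * hsq

theorem polarRotor_add_int_mul_two_pi (θ : ℝ) (m : ℤ) :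
    polarRotor (θ + m * (2 * π)) = (-1 : ℝ) ^ m • polarRotor θ := by
  have hhalf : (θ + m * (2 * π)) / 2 = θ / 2 + m * π := by ring
  ext <;> simp [hhalf, Real.cos_add_int_mul_pi, Real.sin_add_int_mul_pi]

theorem toQuat_unitTangent_stereoInv_mul {γ : ℝ → ℂ} {z : ℂ} {t : ℝ}
    (hγ : HasDerivAt γ (Complex.exp z) t) :
    toQuat (unitTangent (stereoInv ∘ γ) t) * (spinor (γ t) * polarRotor z.im) =
      spinor (γ t) * polarRotor z.im * quatI := by
  have hderiv : deriv (stereoInv ∘ γ) t = fderiv ℝ stereoInv (γ t) (Complex.exp z) :=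
    ((contDiff_stereoInv.differentiable (by simp) _).hasFDerivAt.comp_hasDerivAt t hγ).deriv
  have hspeed : 2 / (Complex.normSq (γ t) + 1) * Real.exp z.re ≠ 0 :=
    (mul_pos (div_pos two_pos (normSq_add_one_pos _)) (Real.exp_pos _)).ne'
  rw [unitTangent, hderiv, norm_fderiv_stereoInv, Complex.norm_exp, map_smul, smul_mul_assoc,
    ← mul_assoc, toQuat_fderiv_stereoInv_mul_spinor, smul_mul_assoc, mul_assoc,
    tangentQuat_cexp_mul_polarRotor, mul_smul_comm, smul_smul _ (Real.exp z.re),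
    inv_smul_smul₀ hspeed, mul_assoc]

theorem HasRotationNumber.hasTangentMonodromy {γ : ℝ → ℂ} {m : ℤ} (hγ : HasRotationNumber γ m) :
    HasTangentMonodromy (stereoInv ∘ γ) ((-1) ^ m) := by
  obtain ⟨hper, φ, hφ, hderiv, hφ_per⟩ := hγ
  have hγ_cont : Continuous γ := continuous_iff_continuousAt.2 fun t => (hderiv t).continuousAt
  have hspinor : Continuous spinor :=
    continuous_iff_continuousAt.2 fun z => (hasFDerivAt_spinor z).continuousAt
  refine ⟨fun t => spinor (γ t) * polarRotor (φ t).im, ?_, fun t => ?_, fun t => ?_,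
    fun t => (toQuat_unitTangent_stereoInv_mul (hderiv t)).symm, ?_⟩
  · exact (hspinor.comp hγ_cont).mul
      (continuous_polarRotor.comp (Complex.continuous_im.comp hφ.continuous))
  · exact mul_ne_zero (spinor_ne_zero _) (polarRotor_ne_zero _)
  · rw [mul_assoc, polarRotor_mul_quatK, ← mul_assoc, ← toQuat_stereoInv_mul_spinor, mul_assoc]
    rfl
  · have hγ_end : γ 1 = γ 0 := by simpa using hper 0
    have hφ_end : (φ 1).im = (φ 0).im + m * (2 * π) := by
      have him := congrArg Complex.im (hφ_per 0)
      simp only [zero_add] at him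
      rw [him]
      simp
      ring
    simp only [hγ_end, hφ_end, polarRotor_add_int_mul_two_pi, mul_smul_comm]

theorem HasRotationNumber.intCast_eq_of_regHomotopic_stereoInv {γ γ' : ℝ → ℂ} {m m' : ℤ}
    (hγ : HasRotationNumber γ m) (hγ' : HasRotationNumber γ' m')
    (hreg : RegHomotopic (Metric.sphere 0 1) (stereoInv ∘ γ) (stereoInv ∘ γ')) :
    (m : ZMod 2) = m' := by
  have hsign : (0 : ℝ) ≤ (-1) ^ (m + m') := by
    rw [zpow_add₀ (by norm_num)]
    exact (hreg.hasTangentMonodromy hγ.hasTangentMonodromy).mul_nonneg hγ'.hasTangentMonodromy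
  have heven : Even (m + m') := by
    by_contra hodd
    rw [(Int.not_even_iff_odd.1 hodd).neg_one_zpow] at hsign
    norm_num at hsign
  rw [ZMod.intCast_eq_intCast_iff_dvd_sub]
  obtain ⟨k, hk⟩ := heven
  exact ⟨k - m, by push_cast; linarith⟩

end SpinMonodromyOfCurve

theorem statement8_general (c c' : SphericalCurve) (ω ω' : ZMod 2) (hω : c.HasWhitney ω)
    (hω' : c'.HasWhitney ω') : SphericalCurve.RegularlyHomotopic c c' ↔ ω = ω' := by
  obtain ⟨γ, m, hγ, rfl, hc⟩ := hω.exists_regHomotopic_stereoInv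
  obtain ⟨γ', m', hγ', rfl, hc'⟩ := hω'.exists_regHomotopic_stereoInv
  rw [SphericalCurve.regularlyHomotopic_iff]
  constructor
  · intro hreg
    exact hγ.intCast_eq_of_regHomotopic_stereoInv hγ' ((hc.symm.trans hreg).trans hc')
  · intro hparity
    exact (hc.trans (hγ.regHomotopic_stereoInv hγ' hparity)).trans hc'.symm

/-- Whitney's theorem, spherical case. Two stable spherical curves are
regularly homotopic if and only if they have the same Whitney number in `{0,1}`. -/
theorem statement8 (c c' : SphericalCurve) (hc : c.Stable) (hc' : c'.Stable)
    (ω ω' : ZMod 2) (hω : c.HasWhitney ω) (hω' : c'.HasWhitney ω') :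
    SphericalCurve.RegularlyHomotopic c c' ↔ ω = ω' := by
  exact statement8_general c c' ω ω' hω hω'

end CurvePaper
end
end
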